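/- arXiv:2311.00955 — 4 statements merged into one kernel-verified Lean document; each statement's English description precedes it below -/
import Mathlib

section
/- Let κ > 0. There exists δ̃ > 0 such that there is a unique continuous function ȳ : [0, δ̃] → ℝ with ȳ(0) = κ which on (0, δ̃] is differentiable and satisfies the steady state equation ȳ′(r) = −(1/(1 − 2m(r)/r))(m(r)/r² + 4π r p(r)), where p(r) = h(ȳ(r)) and m(r) = 4π∫₀^r s² g(ȳ(s)) ds; equivalently, ȳ is the unique continuous solution of the integral equation ȳ(r) = κ − ∫₀^r (1/(1 − 2m(s)/s))(m(s)/s² + 4π s p(s)) ds on [0, δ̃]. -/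
/-!
The steady state equation is solved by a Picard iteration on a short interval `[0, δ]`.

On the band `[κ/2, 3κ/2]` the functions `g` and `h` are smooth, and `e^{3κ}` is both a bound and a
Lipschitz constant for them. With `K = 4π e^{3κ}`, a band-valued `ȳ` therefore has
`0 ≤ m(r) ≤ K r³`, so `m(r)/r²` is harmless at the centre and `1 - 2m(r)/r ≥ 1/2` once `K δ² ≤ 1/16`.
This bounds the integrand by `4 K r` (`integrand_bound`) and makes it depend on `ȳ` in a Lipschitz
way with constant `8 K r` (`integrand_sub_bound`). For `K δ² ≤ min(1, κ)/16` the Picard operator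
then maps the complete space of continuous band-valued functions into itself and contracts distances
by `1/2` (`contracting_picard`), which gives existence.

For uniqueness a competitor need not be band-valued a priori. A solution that left the band would,
at its first exit time, differ from `κ` by at least `κ/2`, while the integral bound only allows
`κ/4` (`sol_mem_band`). Hence every solution is a fixed point of the contraction.
-/


open Real MeasureTheory Set Filter

/-- Hard phase density as a function of `ȳ`: `g(ȳ) = (e^{2ȳ}+1)/2` for `ȳ ≥ 0`, `0` otherwise. -/
noncomputable def gfun (x : ℝ) : ℝ := if 0 ≤ x then (Real.exp (2*x) + 1)/2 else 0

/-- Hard phase pressure as a function of `ȳ`: `h(ȳ) = (e^{2ȳ}−1)/2` for `ȳ ≥ 0`, `0` otherwise. -/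
noncomputable def hfun (x : ℝ) : ℝ := if 0 ≤ x then (Real.exp (2*x) - 1)/2 else 0

/-- Mass function `m(r) = 4π ∫₀^r s² g(ȳ(s)) ds`. -/
noncomputable def mfun (y : ℝ → ℝ) (r : ℝ) : ℝ :=
  4 * Real.pi * ∫ s in (0:ℝ)..r, s^2 * gfun (y s)

/-- Right hand side of the steady state equation
`ȳ′(r) = −(1/(1 − 2m(r)/r)) (m(r)/r² + 4π r p(r))` with `p = h ∘ ȳ`. -/
noncomputable def steadyRHS (y : ℝ → ℝ) (r : ℝ) : ℝ :=
  -(1/(1 - 2 * mfun y r / r)) * (mfun y r / r^2 + 4 * Real.pi * r * hfun (y r))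

/-- `y` is a continuous solution on `[0, δ]` of the integral form of the steady state
equation with central value `κ`. -/
noncomputable def IsIntSol (κ δ : ℝ) (y : ℝ → ℝ) : Prop :=
  ContinuousOn y (Set.Icc 0 δ) ∧ y 0 = κ ∧
  ∀ r ∈ Set.Icc (0:ℝ) δ,
    y r = κ - ∫ s in (0:ℝ)..r,
      (1/(1 - 2 * mfun y s / s)) * (mfun y s / s^2 + 4 * Real.pi * s * hfun (y s))

/-- The integrand of the integral form of the steady state equation. -/
noncomputable def integrand (y : ℝ → ℝ) (s : ℝ) : ℝ :=
  (1/(1 - 2 * mfun y s / s)) * (mfun y s / s^2 + 4 * Real.pi * s * hfun (y s))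

/-- Continuous functions on `ℝ` with values in the band `[κ/2, 3κ/2]` around the central
value. Globally defined functions are used so that `[0, δ]` only enters through extensions. -/
def Band (κ : ℝ) (z : ℝ → ℝ) : Prop :=
  Continuous z ∧ ∀ s, z s ∈ Set.Icc (κ/2) (3*κ/2)

/-- The constant `4π e^{3κ}`. On the band, `e^{3κ}` bounds `g` and `h` and is a Lipschitz constant
for both, so this single constant governs all estimates. -/
noncomputable def bandConst (κ : ℝ) : ℝ := 4 * Real.pi * Real.exp (3*κ)

lemma bandConst_pos (κ : ℝ) : 0 < bandConst κ := by unfold bandConst; positivity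

lemma mfun_congr {y z : ℝ → ℝ} {r : ℝ} (hr : 0 ≤ r) (h : EqOn y z (Icc 0 r)) :
    mfun y r = mfun z r := by
  unfold mfun
  congr 1
  refine intervalIntegral.integral_congr fun s hs => ?_
  rw [uIcc_of_le hr] at hs
  simp only [h hs]

lemma integrand_congr {y z : ℝ → ℝ} {r : ℝ} (hr : 0 ≤ r) (h : EqOn y z (Icc 0 r)) :
    integrand y r = integrand z r := by
  unfold integrand
  rw [mfun_congr hr h, h (right_mem_Icc.2 hr)]

lemma exp_lip {κ x y : ℝ} (hx : x ≤ 3*κ/2) (hy : y ≤ 3*κ/2) :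
    |Real.exp (2*x) - Real.exp (2*y)| ≤ 2 * Real.exp (3*κ) * |x - y| := by
  wlog h : y ≤ x generalizing x y
  · rw [abs_sub_comm, abs_sub_comm x]
    exact this hy hx (le_of_not_ge h)
  have h1 : Real.exp (2*y) ≤ Real.exp (2*x) := Real.exp_le_exp.2 (by linarith)
  have h2 : Real.exp (2*x) ≤ Real.exp (3*κ) := Real.exp_le_exp.2 (by linarith)
  rw [abs_of_nonneg (by linarith), abs_of_nonneg (by linarith)]
  have h3 : Real.exp (2*y) = Real.exp (2*x) * Real.exp (2*y-2*x) := by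
    rw [← Real.exp_add]; ring_nf
  have h4 := Real.add_one_le_exp (2*y-2*x)
  have h5 := Real.exp_pos (2*x)
  rw [h3]
  calc _ = Real.exp (2*x) * (1 - Real.exp (2*y-2*x)) := by ring
    _ ≤ Real.exp (2*x) * (2*(x-y)) := by gcongr; linarith
    _ ≤ Real.exp (3*κ) * (2*(x-y)) := mul_le_mul_of_nonneg_right h2 (by linarith)
    _ = _ := by ring

section estimates

variable {κ : ℝ} (hκ : 0 < κ) {z w : ℝ → ℝ} (hz : Band κ z) (hw : Band κ w)

include hκ hz in
lemma gfun_eq (s : ℝ) : gfun (z s) = (Real.exp (2 * z s) + 1)/2 := by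
  have := (hz.2 s).1
  rw [gfun, if_pos (by linarith)]

include hκ hz in
lemma hfun_eq (s : ℝ) : hfun (z s) = (Real.exp (2 * z s) - 1)/2 := by
  have := (hz.2 s).1
  rw [hfun, if_pos (by linarith)]

include hκ hz in
lemma one_le_exp_band (s : ℝ) : 1 ≤ Real.exp (2 * z s) ∧ Real.exp (2 * z s) ≤ Real.exp (3*κ) := by
  have h := hz.2 s
  exact ⟨Real.one_le_exp (by linarith [h.1]), Real.exp_le_exp.2 (by linarith [h.2])⟩

include hκ hz in
lemma continuous_mass_integrand : Continuous fun s => s^2 * gfun (z s) := by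
  have hc := hz.1
  simp only [gfun_eq hκ hz]
  fun_prop

include hκ hz in
lemma continuous_mfun : Continuous (mfun z) := by
  unfold mfun
  refine continuous_const.mul (intervalIntegral.continuous_primitive (fun a b => ?_) 0)
  exact (continuous_mass_integrand hκ hz).intervalIntegrable a b

include hκ hz in
lemma measurable_integrand : Measurable (integrand z) := by
  have h1 := (continuous_mfun hκ hz).measurable
  have h2 := hz.1.measurable
  unfold integrand
  simp only [hfun_eq hκ hz]
  fun_prop

include hκ hz in
lemma mfun_nonneg {r : ℝ} (hr : 0 ≤ r) : 0 ≤ mfun z r := by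
  unfold mfun
  refine mul_nonneg (by positivity) (intervalIntegral.integral_nonneg hr fun s _ => ?_)
  rw [gfun_eq hκ hz]
  positivity

include hκ hz in
lemma mfun_le {r : ℝ} (hr : 0 ≤ r) : mfun z r ≤ bandConst κ * r^3 := by
  have h : ‖∫ s in (0:ℝ)..r, s^2 * gfun (z s)‖ ≤ (r^2 * Real.exp (3*κ)) * |r - 0| := by
    refine intervalIntegral.norm_integral_le_of_norm_le_const fun s hs => ?_
    rw [uIoc_of_le hr] at hs
    obtain ⟨h1, h2⟩ := one_le_exp_band hκ hz s
    have h0 := hs.1.le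
    rw [gfun_eq hκ hz, Real.norm_of_nonneg (by positivity)]
    gcongr
    · exact hs.2
    · linarith
  rw [sub_zero, abs_of_nonneg hr] at h
  have h' := (le_abs_self _).trans h
  unfold mfun bandConst
  calc _ ≤ 4 * Real.pi * (r^2 * Real.exp (3*κ) * r) := by gcongr
    _ = _ := by ring

include hκ hz hw in
lemma mfun_sub_le {r D : ℝ} (hr : 0 ≤ r) (hD : ∀ s ∈ Icc 0 r, |z s - w s| ≤ D) :
    |mfun z r - mfun w r| ≤ bandConst κ * r^3 * D := by
  have h : ‖∫ s in (0:ℝ)..r, (s^2 * gfun (z s) - s^2 * gfun (w s))‖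
      ≤ (r^2 * (Real.exp (3*κ) * D)) * |r - 0| := by
    refine intervalIntegral.norm_integral_le_of_norm_le_const fun s hs => ?_
    rw [uIoc_of_le hr] at hs
    have h0 := hs.1.le
    have h1 := exp_lip (hz.2 s).2 (hw.2 s).2
    have h2 : |gfun (z s) - gfun (w s)| ≤ Real.exp (3*κ) * D := by
      have e : gfun (z s) - gfun (w s) = (Real.exp (2 * z s) - Real.exp (2 * w s))/2 := by
        rw [gfun_eq hκ hz, gfun_eq hκ hw]; ring
      rw [e, abs_div, abs_two]
      have := mul_le_mul_of_nonneg_left (hD s ⟨h0, hs.2⟩) (Real.exp_pos (3*κ)).le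
      linarith
    rw [← mul_sub, Real.norm_eq_abs, abs_mul, abs_of_nonneg (sq_nonneg s)]
    gcongr
    exact hs.2
  rw [sub_zero, abs_of_nonneg hr, intervalIntegral.integral_sub
    ((continuous_mass_integrand hκ hz).intervalIntegrable _ _)
    ((continuous_mass_integrand hκ hw).intervalIntegrable _ _), Real.norm_eq_abs] at h
  unfold mfun bandConst
  rw [← mul_sub, abs_mul, abs_of_nonneg (by positivity : 0 ≤ 4 * Real.pi)]
  calc _ ≤ 4 * Real.pi * (r^2 * (Real.exp (3*κ) * D) * r) := by gcongr
    _ = _ := by ring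

include hκ hz in
/-- For `K r² ≤ 1/16` the metric factor `1/(1 - 2m/r)` lies in `[0, 2]` and its denominator does
not vanish. -/
lemma denom_ge {r : ℝ} (hr : 0 < r) (hs : bandConst κ * r^2 ≤ 1/16) :
    1/2 ≤ 1 - 2 * mfun z r / r := by
  have h : 2 * mfun z r / r ≤ 2 * (bandConst κ * r^2) := by
    rw [div_le_iff₀ hr]
    nlinarith [mfun_le hκ hz hr.le]
  linarith

include hκ hz in
lemma source_bound {r : ℝ} (hr : 0 < r) :
    |mfun z r / r^2 + 4 * Real.pi * r * hfun (z r)| ≤ 2 * bandConst κ * r := by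
  obtain ⟨h1, h2⟩ := one_le_exp_band hκ hz r
  have hm0 := mfun_nonneg hκ hz hr.le
  have hm : mfun z r / r^2 ≤ bandConst κ * r := by
    rw [div_le_iff₀ (by positivity)]
    nlinarith [mfun_le hκ hz hr.le]
  have hh0 : 0 ≤ hfun (z r) := by rw [hfun_eq hκ hz]; linarith
  have hh : 4 * Real.pi * r * hfun (z r) ≤ 4 * Real.pi * r * Real.exp (3*κ) := by
    gcongr
    rw [hfun_eq hκ hz]; linarith
  rw [abs_of_nonneg (by positivity)]
  unfold bandConst at *
  linarith

lemma one_div_abs_le {a : ℝ} (ha : 1/2 ≤ a) : |1/a| ≤ 2 := by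
  rw [abs_of_nonneg (by positivity), div_le_iff₀ (by linarith)]
  linarith

include hκ hz in
lemma integrand_bound {r : ℝ} (hr : 0 < r) (hs : bandConst κ * r^2 ≤ 1/16) :
    |integrand z r| ≤ 4 * bandConst κ * r := by
  unfold integrand
  rw [abs_mul]
  calc _ ≤ 2 * (2 * bandConst κ * r) := by
        gcongr
        · exact one_div_abs_le (denom_ge hκ hz hr hs)
        · exact source_bound hκ hz hr
    _ = _ := by ring

include hκ hz hw in
lemma integrand_sub_bound {r D : ℝ} (hr : 0 < r) (hs : bandConst κ * r^2 ≤ 1/16)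
    (hD : ∀ s ∈ Icc 0 r, |z s - w s| ≤ D) :
    |integrand z r - integrand w r| ≤ 8 * bandConst κ * r * D := by
  have hD0 : 0 ≤ D := (abs_nonneg _).trans (hD r ⟨hr.le, le_rfl⟩)
  have hK := bandConst_pos κ
  have hm := mfun_sub_le hκ hz hw hr.le hD
  have dz := denom_ge hκ hz hr hs
  have dw := denom_ge hκ hw hr hs
  have bz := source_bound hκ hz hr
  -- the difference of the two metric factors
  have hA : |1/(1 - 2 * mfun z r / r) - 1/(1 - 2 * mfun w r / r)|
      ≤ 8 * (bandConst κ * r^2) * D := by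
    have e : 1/(1 - 2 * mfun z r / r) - 1/(1 - 2 * mfun w r / r)
        = 1/(1 - 2 * mfun z r / r) * (1/(1 - 2 * mfun w r / r)) *
          (2 * (mfun z r - mfun w r) / r) := by
      generalize hp : 1 - 2 * mfun z r / r = p at *
      generalize hq : 1 - 2 * mfun w r / r = q at *
      have : 2 * (mfun z r - mfun w r) / r = q - p := by rw [← hp, ← hq]; ring
      rw [this]
      have : p ≠ 0 := by linarith
      have : q ≠ 0 := by linarith
      field_simp
    have hd : |2 * (mfun z r - mfun w r) / r| ≤ 2 * (bandConst κ * r^2) * D := by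
      rw [abs_div, abs_mul, abs_two, abs_of_pos hr, div_le_iff₀ hr]
      nlinarith
    rw [e, abs_mul, abs_mul]
    calc _ ≤ 2 * 2 * (2 * (bandConst κ * r^2) * D) := by
          gcongr
          · exact one_div_abs_le dz
          · exact one_div_abs_le dw
      _ = _ := by ring
  -- the difference of the two source terms
  have hB : |(mfun z r / r^2 + 4 * Real.pi * r * hfun (z r))
      - (mfun w r / r^2 + 4 * Real.pi * r * hfun (w r))| ≤ 2 * bandConst κ * r * D := by
    have e : (mfun z r / r^2 + 4 * Real.pi * r * hfun (z r))
        - (mfun w r / r^2 + 4 * Real.pi * r * hfun (w r))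
        = (mfun z r - mfun w r) / r^2
          + 2 * Real.pi * r * (Real.exp (2 * z r) - Real.exp (2 * w r)) := by
      rw [hfun_eq hκ hz, hfun_eq hκ hw]; ring
    have h1 : |(mfun z r - mfun w r) / r^2| ≤ bandConst κ * r * D := by
      rw [abs_div, abs_of_pos (by positivity : 0 < r^2), div_le_iff₀ (by positivity)]
      nlinarith
    have h2 : |2 * Real.pi * r * (Real.exp (2 * z r) - Real.exp (2 * w r))|
        ≤ bandConst κ * r * D := by
      rw [abs_mul, abs_of_pos (by positivity : 0 < 2 * Real.pi * r)]
      calc _ ≤ 2 * Real.pi * r * (2 * Real.exp (3*κ) * D) := by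
            gcongr
            refine (exp_lip (hz.2 r).2 (hw.2 r).2).trans ?_
            gcongr
            exact hD r ⟨hr.le, le_rfl⟩
        _ = _ := by unfold bandConst; ring
    rw [e]
    refine (abs_add_le _ _).trans ?_
    linarith
  unfold integrand
  generalize 1/(1 - 2 * mfun z r / r) = A at *
  generalize hA' : 1/(1 - 2 * mfun w r / r) = A' at *
  generalize mfun z r / r^2 + 4 * Real.pi * r * hfun (z r) = B at *
  generalize mfun w r / r^2 + 4 * Real.pi * r * hfun (w r) = B' at *
  have hA2 : |A'| ≤ 2 := hA' ▸ one_div_abs_le dw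
  have e : A * B - A' * B' = (A - A') * B + A' * (B - B') := by ring
  rw [e]
  refine (abs_add_le _ _).trans ?_
  rw [abs_mul, abs_mul]
  calc _ ≤ (8 * (bandConst κ * r^2) * D) * (2 * bandConst κ * r)
        + 2 * (2 * bandConst κ * r * D) := by gcongr
    _ ≤ (8 * (1/16) * D) * (2 * bandConst κ * r) + 2 * (2 * bandConst κ * r * D) := by gcongr
    _ ≤ _ := by
      have : 0 ≤ bandConst κ * r * D := by positivity
      linarith

variable {δ : ℝ} (hs : bandConst κ * δ^2 ≤ 1/16)

include hs in
lemma small_of_le {r : ℝ} (hr : 0 < r) (h : r ≤ δ) :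
    bandConst κ * r^2 ≤ 1/16 := by
  refine le_trans ?_ hs
  have := (bandConst_pos κ).le
  gcongr

include hκ hz hs in
lemma intervalIntegrable_integrand {r : ℝ} (hr : r ∈ Icc 0 δ) :
    IntervalIntegrable (integrand z) volume 0 r := by
  have hK := bandConst_pos κ
  refine (intervalIntegrable_const (c := 4 * bandConst κ * δ)).mono_fun
    (measurable_integrand hκ hz).aestronglyMeasurable ?_
  rw [uIoc_of_le hr.1]
  refine (ae_restrict_iff' measurableSet_Ioc).2 (Eventually.of_forall fun s hs' => ?_)
  have hsδ := hs'.2.trans hr.2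
  refine ((integrand_bound hκ hz hs'.1 (small_of_le hs hs'.1 hsδ)).trans ?_).trans
    (le_abs_self _)
  gcongr

include hκ hz hs in
lemma integral_bound {r : ℝ} (hr : r ∈ Icc 0 δ) :
    |∫ s in (0:ℝ)..r, integrand z s| ≤ 4 * (bandConst κ * δ^2) := by
  have hK := bandConst_pos κ
  have hδ := hr.1.trans hr.2
  have h : ‖∫ s in (0:ℝ)..r, integrand z s‖ ≤ (4 * bandConst κ * δ) * |r - 0| := by
    refine intervalIntegral.norm_integral_le_of_norm_le_const fun s hs' => ?_
    rw [uIoc_of_le hr.1] at hs'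
    have hsδ := hs'.2.trans hr.2
    refine (integrand_bound hκ hz hs'.1 (small_of_le hs hs'.1 hsδ)).trans ?_
    gcongr
  rw [sub_zero, abs_of_nonneg hr.1, Real.norm_eq_abs] at h
  calc _ ≤ _ := h
    _ ≤ (4 * bandConst κ * δ) * δ := by gcongr; exact hr.2
    _ = _ := by ring

include hκ hz hw hs in
lemma integral_sub_bound {r D : ℝ} (hr : r ∈ Icc 0 δ) (hD : ∀ s ∈ Icc 0 δ, |z s - w s| ≤ D) :
    |(∫ s in (0:ℝ)..r, integrand z s) - ∫ s in (0:ℝ)..r, integrand w s| ≤ D / 2 := by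
  have hK := bandConst_pos κ
  have hδ := hr.1.trans hr.2
  have hD0 : 0 ≤ D := (abs_nonneg _).trans (hD r hr)
  have h : ‖∫ s in (0:ℝ)..r, (integrand z s - integrand w s)‖
      ≤ (8 * bandConst κ * δ * D) * |r - 0| := by
    refine intervalIntegral.norm_integral_le_of_norm_le_const fun s hs' => ?_
    rw [uIoc_of_le hr.1] at hs'
    have hsδ := hs'.2.trans hr.2
    refine (integrand_sub_bound hκ hz hw hs'.1 (small_of_le hs hs'.1 hsδ)
      fun t ht => hD t ⟨ht.1, ht.2.trans hsδ⟩).trans ?_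
    gcongr
  rw [sub_zero, abs_of_nonneg hr.1, Real.norm_eq_abs, intervalIntegral.integral_sub
    (intervalIntegrable_integrand hκ hz hs hr) (intervalIntegrable_integrand hκ hw hs hr)] at h
  calc _ ≤ _ := h
    _ ≤ (8 * bandConst κ * δ * D) * δ := by gcongr; exact hr.2
    _ = 8 * D * (bandConst κ * δ^2) := by ring
    _ ≤ 8 * D * (1/16) := by gcongr
    _ = _ := by ring

end estimates

/-- The complete metric space on which the contraction acts: continuous functions on `[0, δ]`
with values in the band `[κ/2, 3κ/2]`. -/
abbrev BandSpace (κ δ : ℝ) := C(Icc (0:ℝ) δ, Icc (κ/2) (3*κ/2))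

/-- The extension of a band-valued function on `[0, δ]` to `ℝ`, constant outside `[0, δ]`. -/
noncomputable def extendConst {κ δ : ℝ} (hδ : 0 ≤ δ) (u : BandSpace κ δ) (s : ℝ) : ℝ :=
  (u (projIcc 0 δ hδ s) : ℝ)

lemma band_extend {κ δ : ℝ} (hδ : 0 ≤ δ) (u : BandSpace κ δ) : Band κ (extendConst hδ u) :=
  ⟨continuous_subtype_val.comp (u.continuous.comp continuous_projIcc), fun _ => Subtype.coe_prop _⟩

lemma extend_coe {κ δ : ℝ} (hδ : 0 ≤ δ) (u : BandSpace κ δ) (r : Icc (0:ℝ) δ) :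
    extendConst hδ u r = u r := by
  simp [extendConst]

/-- The Picard operator `(Tu)(r) = κ - ∫₀^r integrand`, which maps the band into itself when `δ` is
small. -/
noncomputable def picard {κ δ : ℝ} (hκ : 0 < κ) (hδ : 0 ≤ δ) (hs : bandConst κ * δ^2 ≤ 1/16)
    (hs' : bandConst κ * δ^2 ≤ κ/16) (u : BandSpace κ δ) : BandSpace κ δ where
  toFun r := ⟨κ - ∫ s in (0:ℝ)..r, integrand (extendConst hδ u) s, by
    have h := abs_le.1 (integral_bound hκ (band_extend hδ u) hs r.2)
    constructor <;> linarith [h.1, h.2]⟩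
  continuous_toFun := by
    refine Continuous.subtype_mk (continuous_const.sub ?_) _
    have hi := intervalIntegrable_integrand hκ (band_extend hδ u) hs (right_mem_Icc.2 hδ)
    have hc := intervalIntegral.continuousOn_primitive_interval
      (f := integrand (extendConst hδ u)) (μ := volume) (a := 0) (b := δ)
      (by rw [uIcc_of_le hδ]; exact (intervalIntegrable_iff_integrableOn_Icc_of_le hδ).1 hi)
    rw [uIcc_of_le hδ] at hc
    exact continuousOn_iff_continuous_domRestrict.1 hc

lemma contracting_picard {κ δ : ℝ} (hκ : 0 < κ) (hδ : 0 ≤ δ) (hs : bandConst κ * δ^2 ≤ 1/16)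
    (hs' : bandConst κ * δ^2 ≤ κ/16) : ContractingWith (1/2) (picard hκ hδ hs hs') := by
  refine ⟨by rw [← NNReal.coe_lt_coe]; norm_num, LipschitzWith.of_dist_le_mul fun u v => ?_⟩
  rw [ContinuousMap.dist_le (by positivity)]
  intro r
  have h := integral_sub_bound hκ (band_extend hδ v) (band_extend hδ u) hs r.2 (D := dist u v)
    fun s hs => by
      rw [extend_coe hδ v ⟨s, hs⟩, extend_coe hδ u ⟨s, hs⟩, ← Real.dist_eq, dist_comm]
      exact ContinuousMap.dist_apply_le_dist (f := u) (g := v) ⟨s, hs⟩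
  rw [Subtype.dist_eq, Real.dist_eq]
  have e : ((picard hκ hδ hs hs' u r : ℝ) - (picard hκ hδ hs hs' v r : ℝ))
      = (∫ s in (0:ℝ)..r, integrand (extendConst hδ v) s)
        - ∫ s in (0:ℝ)..r, integrand (extendConst hδ u) s := by
    simp only [picard, ContinuousMap.coe_mk]; ring
  rw [e]
  refine h.trans (le_of_eq ?_)
  push_cast
  ring

/-- The truncation of a continuous function on `[0, δ]` to the band. -/
noncomputable def truncate {κ δ : ℝ} (hκ : 0 < κ) {y : ℝ → ℝ} (hy : ContinuousOn y (Icc 0 δ)) :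
    BandSpace κ δ where
  toFun r := projIcc (κ/2) (3*κ/2) (by linarith) (y r)
  continuous_toFun := (continuous_projIcc (h := by linarith)).comp
    (continuousOn_iff_continuous_domRestrict.1 hy)

lemma extend_truncate {κ δ : ℝ} (hκ : 0 < κ) (hδ : 0 ≤ δ) {y : ℝ → ℝ}
    (hy : ContinuousOn y (Icc 0 δ)) {s : ℝ} (hs : s ∈ Icc 0 δ) (h : |y s - κ| ≤ κ/2) :
    extendConst hδ (truncate hκ hy) s = y s := by
  rw [extend_coe hδ _ ⟨s, hs⟩]
  rw [abs_le] at h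
  have hm : y s ∈ Icc (κ/2) (3*κ/2) := ⟨by linarith [h.1], by linarith [h.2]⟩
  exact congrArg Subtype.val (projIcc_of_mem (hm.1.trans hm.2) hm)

/-- A priori bound: a solution cannot leave the band on `[0, δ]`. At a first exit time the solution
equals `κ` minus the integral of the integrand of its truncation, which is too small for an exit. -/
lemma sol_mem_band {κ δ : ℝ} (hκ : 0 < κ) (hδ : 0 ≤ δ) (hs : bandConst κ * δ^2 ≤ 1/16)
    (hs' : bandConst κ * δ^2 ≤ κ/16) {y : ℝ → ℝ} (hy : IsIntSol κ δ y) :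
    ∀ s ∈ Icc 0 δ, |y s - κ| ≤ κ/2 := by
  by_contra! hcon
  obtain ⟨t, ht, hty⟩ := hcon
  have hcl : IsClosed (Icc 0 δ ∩ (fun s => |y s - κ|) ⁻¹' Ici (κ/2)) :=
    ((hy.1.sub continuousOn_const).abs).preimage_isClosed_of_isClosed isClosed_Icc isClosed_Ici
  obtain ⟨r, ⟨hr, hry⟩, hmin⟩ :=
    (isCompact_Icc.of_isClosed_subset hcl inter_subset_left).exists_isLeast ⟨t, ht, hty.le⟩
  set z := extendConst hδ (truncate hκ hy.1) with hzdef
  have hlt : ∀ s ∈ Ico 0 r, z s = y s := fun s hs => by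
    have hsδ : s ∈ Icc 0 δ := ⟨hs.1, hs.2.le.trans hr.2⟩
    refine extend_truncate hκ hδ hy.1 hsδ ?_
    by_contra! h
    exact absurd (hmin ⟨hsδ, h.le⟩) (not_le.2 hs.2)
  -- the integrands agree on `(0, r)`, hence almost everywhere on `(0, r]`
  have hint : (∫ s in (0:ℝ)..r, integrand y s) = ∫ s in (0:ℝ)..r, integrand z s := by
    rw [intervalIntegral.integral_of_le hr.1, intervalIntegral.integral_of_le hr.1,
      integral_Ioc_eq_integral_Ioo, integral_Ioc_eq_integral_Ioo]
    refine setIntegral_congr_fun measurableSet_Ioo fun s hs => ?_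
    exact integrand_congr hs.1.le fun q hq => (hlt q ⟨hq.1, hq.2.trans_lt hs.2⟩).symm
  have hyr : y r = κ - ∫ s in (0:ℝ)..r, integrand y s := hy.2.2 r hr
  have hb := integral_bound hκ (band_extend hδ (truncate hκ hy.1)) hs hr
  rw [← hzdef, ← hint] at hb
  have hry' : κ/2 ≤ |y r - κ| := hry
  rw [hyr, sub_sub_cancel_left, abs_neg] at hry'
  linarith

lemma sol_isFixedPt {κ δ : ℝ} (hκ : 0 < κ) (hδ : 0 ≤ δ) (hs : bandConst κ * δ^2 ≤ 1/16)
    (hs' : bandConst κ * δ^2 ≤ κ/16) {y : ℝ → ℝ} (hy : IsIntSol κ δ y) :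
    Function.IsFixedPt (picard hκ hδ hs hs') (truncate hκ hy.1) := by
  have hband := sol_mem_band hκ hδ hs hs' hy
  have heq : ∀ s ∈ Icc 0 δ, extendConst hδ (truncate hκ hy.1) s = y s := fun s hs =>
    extend_truncate hκ hδ hy.1 hs (hband s hs)
  refine ContinuousMap.ext fun r => Subtype.ext ?_
  have hyr : y r = κ - ∫ s in (0:ℝ)..r, integrand y s := hy.2.2 r r.2
  rw [← extend_coe hδ (truncate hκ hy.1), heq r r.2, hyr]
  change κ - _ = _
  congr 1
  refine intervalIntegral.integral_congr fun s hs => ?_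
  rw [uIcc_of_le r.2.1] at hs
  exact integrand_congr hs.1 fun q hq => heq q ⟨hq.1, (hq.2.trans hs.2).trans r.2.2⟩

/-- Local existence and uniqueness of the steady state: for every central redshift `κ > 0`
there is `δ̃ > 0` such that the integral equation
`ȳ(r) = κ − ∫₀^r (1/(1 − 2m(s)/s))(m(s)/s² + 4π s p(s)) ds` has a continuous solution
on `[0, δ̃]`, and any two such solutions agree on `[0, δ̃]`. -/
theorem local_existence_uniqueness_steady_state (κ : ℝ) (hκ : 0 < κ) :
    ∃ δ > (0:ℝ), (∃ y : ℝ → ℝ, IsIntSol κ δ y) ∧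
      ∀ y₁ y₂ : ℝ → ℝ, IsIntSol κ δ y₁ → IsIntSol κ δ y₂ →
        Set.EqOn y₁ y₂ (Set.Icc 0 δ) := by
  have hK := bandConst_pos κ
  have hmin : 0 < min 1 κ := lt_min one_pos hκ
  have hsq : bandConst κ * (√(min 1 κ / (16 * bandConst κ)))^2 = min 1 κ / 16 := by
    rw [Real.sq_sqrt (by positivity)]
    field_simp
  have hδ' : 0 < √(min 1 κ / (16 * bandConst κ)) := by positivity
  generalize √(min 1 κ / (16 * bandConst κ)) = δ at hsq hδ'
  have hδ := hδ'.le
  have hs : bandConst κ * δ^2 ≤ 1/16 := by linarith [min_le_left 1 κ]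
  have hs' : bandConst κ * δ^2 ≤ κ/16 := by linarith [min_le_right 1 κ]
  have hT := contracting_picard hκ hδ hs hs'
  have : CompleteSpace (Icc (κ/2) (3*κ/2)) := isClosed_Icc.completeSpace_coe
  have : Nonempty (BandSpace κ δ) :=
    ⟨ContinuousMap.const _ ⟨κ, by constructor <;> linarith⟩⟩
  refine ⟨δ, hδ', ?_, fun y₁ y₂ h₁ h₂ s hsδ => ?_⟩
  · have hfix : picard hκ hδ hs hs' (hT.fixedPoint) = hT.fixedPoint := hT.fixedPoint_isFixedPt
    generalize hT.fixedPoint = u at hfix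
    have heq : ∀ r ∈ Icc (0:ℝ) δ,
        extendConst hδ u r = κ - ∫ s in (0:ℝ)..r, integrand (extendConst hδ u) s := fun r hr => by
      rw [extend_coe hδ u ⟨r, hr⟩]
      conv_lhs => rw [← hfix]
      rfl
    refine ⟨extendConst hδ u, (band_extend hδ u).1.continuousOn, ?_, heq⟩
    rw [heq 0 (left_mem_Icc.2 hδ), intervalIntegral.integral_same, sub_zero]
  · rw [← extend_truncate hκ hδ h₁.1 hsδ (sol_mem_band hκ hδ hs hs' h₁ s hsδ),
      ← extend_truncate hκ hδ h₂.1 hsδ (sol_mem_band hκ hδ hs hs' h₂ s hsδ),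
      hT.fixedPoint_unique' (sol_isFixedPt hκ hδ hs hs' h₁) (sol_isFixedPt hκ hδ hs hs' h₂)]
end

section
/- Let κ > 0. The unique solution ȳ of the steady state equation with ȳ(0) = κ extends to a global solution ȳ : [0, ∞) → ℝ; in particular, along the solution one has 1 − 2m(r)/r > 0 for all r > 0, so the equation is defined for all r and the maximal interval of existence is [0, ∞). -/
/-!
In the fluid region `p = ρ - 1`, `ρ ≥ 1`, and `ρ ≤ B := g(κ)` as long as `0 ≤ y ≤ κ`. Write
`x = 1 - 2m/r`. Then `x' = 2m/r² - 8πrρ ≥ -8πrB`, while `m ≥ 4πr³/3` gives `y' ≤ -(4πr/3)/x`, so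
`(log x)' ≥ 6B y'` and hence `x ≥ exp(6B(y - κ))`, which is at least `δ := exp(-6Bκ)` while `y ≥ 0`.

This a priori bound permits cutting off the denominator at `δ` and the argument of `g` to `[0, κ]`.
The resulting equation is a Volterra equation with Lipschitz right-hand side, regular at the centre
once expressed through `m/r³` (`meanDensity`), and is solved on `[0, 1]` by `volterra_fixed_point`.
The barrier argument `nonneg_of_barrier` shows the denominator cutoff is inactive while `y ≥ 0`.
Since `2m/r ≥ 8π/3 > 1` at `r = 1`, the solution must vanish at some `R < 1` (`exists_interior`).

Beyond `R` the solution is continued by the explicit Schwarzschild exterior of mass `M = m(R)`,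
`y(r) = (log (1 - 2M/R) - log (1 - 2M/r)) / 2 < 0`, along which density and pressure vanish. The
right-hand side is continuous across `R` because the pressure vanishes there, although `ρ` jumps.
-/

open Real MeasureTheory Set Filter

/-! ### Volterra equations and a barrier lemma -/

/-- Existence for Volterra equations `y = κ + ∫₀ Φ(y)` on `[0, 1]`, where `Φ(y)(s)` may depend on
the history of `y` on `[0, s]` in a Lipschitz way. The `n`-th iterate of the integral operator has
Lipschitz constant `K ^ n / n!`, hence is a contraction for large `n`. -/
lemma volterra_fixed_point (Φ : (ℝ → ℝ) → ℝ → ℝ) (κ K : ℝ) (hK : 0 ≤ K)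
    (hcont : ∀ y, Continuous y → Continuous (Φ y))
    (hlip : ∀ y z, Continuous y → Continuous z → ∀ s ∈ Icc (0:ℝ) 1, ∀ D,
      (∀ t ∈ Icc (0:ℝ) s, |y t - z t| ≤ D) → |Φ y s - Φ z s| ≤ K * D) :
    ∃ y : ℝ → ℝ, Continuous y ∧
      ∀ r ∈ Icc (0:ℝ) 1, y r = κ + ∫ s in (0:ℝ)..r, Φ y s := by
  let e : C(Icc (0:ℝ) 1, ℝ) → ℝ → ℝ := fun y => IccExtend zero_le_one y
  have he : ∀ y, Continuous (e y) := fun y => y.continuous.Icc_extend'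
  have hev : ∀ y (t : ℝ) (ht : t ∈ Icc (0:ℝ) 1), e y t = y ⟨t, ht⟩ :=
    fun y t ht => IccExtend_of_mem zero_le_one y ht
  have hc : ∀ y, Continuous (Φ (e y)) := fun y => hcont _ (he y)
  have hi : ∀ y (a b : ℝ), IntervalIntegrable (Φ (e y)) volume a b :=
    fun y a b => (hc y).intervalIntegrable a b
  let T : C(Icc (0:ℝ) 1, ℝ) → C(Icc (0:ℝ) 1, ℝ) := fun y =>
    ⟨fun r => κ + ∫ s in (0:ℝ)..r, Φ (e y) s,
      continuous_const.add
        ((intervalIntegral.continuous_primitive (hi y) 0).comp continuous_subtype_val)⟩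
  have hT : ∀ y r, T y r = κ + ∫ s in (0:ℝ)..r, Φ (e y) s := fun y r => rfl
  have key : ∀ (n : ℕ) y z (r : Icc (0:ℝ) 1),
      |(T^[n] y) r - (T^[n] z) r| ≤ K ^ n / n.factorial * dist y z * (r:ℝ) ^ n := by
    intro n y z
    induction n with
    | zero =>
      intro r
      simpa [Real.dist_eq] using ContinuousMap.dist_apply_le_dist (f := y) (g := z) r
    | succ n ih =>
      intro r
      set u := T^[n] y
      set v := T^[n] z
      rw [Function.iterate_succ_apply', Function.iterate_succ_apply', hT, hT]
      have hsub : (κ + ∫ s in (0:ℝ)..r, Φ (e u) s) - (κ + ∫ s in (0:ℝ)..r, Φ (e v) s)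
          = ∫ s in (0:ℝ)..r, (Φ (e u) s - Φ (e v) s) := by
        rw [intervalIntegral.integral_sub (hi _ _ _) (hi _ _ _)]; ring
      rw [hsub]
      have hb : ∀ s ∈ Icc (0:ℝ) r, |Φ (e u) s - Φ (e v) s|
          ≤ K * (K ^ n / n.factorial * dist y z * s ^ n) := by
        intro s hs
        refine hlip _ _ (he u) (he v) s ⟨hs.1, hs.2.trans r.2.2⟩ _ ?_
        intro t ht
        have ht1 : t ∈ Icc (0:ℝ) 1 := ⟨ht.1, ht.2.trans (hs.2.trans r.2.2)⟩
        rw [hev u t ht1, hev v t ht1]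
        refine (ih ⟨t, ht1⟩).trans ?_
        have := pow_le_pow_left₀ ht.1 ht.2 n
        exact mul_le_mul_of_nonneg_left this (by positivity)
      calc |∫ s in (0:ℝ)..r, (Φ (e u) s - Φ (e v) s)|
          ≤ ∫ s in (0:ℝ)..r, |Φ (e u) s - Φ (e v) s| :=
            intervalIntegral.abs_integral_le_integral_abs r.2.1
        _ ≤ ∫ s in (0:ℝ)..r, K * (K ^ n / n.factorial * dist y z * s ^ n) := by
            refine intervalIntegral.integral_mono_on r.2.1 ?_ ?_ hb
            · exact (((hc u).sub (hc v)).abs).intervalIntegrable _ _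
            · exact (by fun_prop : Continuous fun s : ℝ =>
                K * (K ^ n / n.factorial * dist y z * s ^ n)).intervalIntegrable _ _
        _ = K ^ (n + 1) / (n + 1).factorial * dist y z * (r:ℝ) ^ (n + 1) := by
            rw [intervalIntegral.integral_const_mul, intervalIntegral.integral_const_mul,
              integral_pow, Nat.factorial_succ]
            push_cast
            have : (n.factorial : ℝ) ≠ 0 := by positivity
            have : (n : ℝ) + 1 ≠ 0 := by positivity
            field_simp
            simp
            ring
  obtain ⟨n, hn⟩ := ((FloorSemiring.tendsto_pow_div_factorial_atTop K).eventually
    (gt_mem_nhds zero_lt_one)).exists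
  have hq0 : 0 ≤ K ^ n / n.factorial := by positivity
  have hctr : ContractingWith ⟨K ^ n / n.factorial, hq0⟩ T^[n] := by
    refine ⟨by exact_mod_cast hn, LipschitzWith.of_dist_le_mul fun y z => ?_⟩
    refine (ContinuousMap.dist_le (by positivity)).2 fun r => ?_
    rw [Real.dist_eq]
    refine (key n y z r).trans ?_
    exact mul_le_of_le_one_right (by positivity) (pow_le_one₀ r.2.1 r.2.2)
  have hfix := hctr.isFixedPt_fixedPoint_iterate
  set y := ContractingWith.fixedPoint T^[n] hctr
  refine ⟨e y, he y, fun r hr => ?_⟩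
  rw [hev y r hr]
  have h1 : T y = y := hfix
  calc y ⟨r, hr⟩ = T y ⟨r, hr⟩ := by rw [h1]
    _ = _ := hT _ _

/-- A function starting nonnegative stays nonnegative if its derivative is nonnegative wherever the
function is negative. -/
lemma nonneg_of_barrier {φ φ' : ℝ → ℝ} {r : ℝ} (hr : 0 ≤ r) (hc : ContinuousOn φ (Icc 0 r))
    (h0 : 0 ≤ φ 0) (hd : ∀ s ∈ Ioo 0 r, HasDerivAt φ (φ' s) s)
    (hb : ∀ s ∈ Ioo 0 r, φ s < 0 → 0 ≤ φ' s) : 0 ≤ φ r := by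
  have hcl : IsCompact (Icc 0 r ∩ φ ⁻¹' Ici 0) :=
    isCompact_Icc.of_isClosed_subset (hc.preimage_isClosed_of_isClosed isClosed_Icc isClosed_Ici)
      inter_subset_left
  have hne : (Icc 0 r ∩ φ ⁻¹' Ici 0).Nonempty := ⟨0, ⟨le_rfl, hr⟩, h0⟩
  -- `a` is the last point of `[0, r]` at which `φ ≥ 0`; beyond it `φ` is monotone
  obtain ⟨a, ⟨haI, ha0⟩, hmax⟩ := hcl.exists_isGreatest hne
  have hmono : MonotoneOn φ (Icc a r) := by
    have hsub : ∀ s ∈ Ioo a r, s ∈ Ioo 0 r := fun s hs => ⟨haI.1.trans_lt hs.1, hs.2⟩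
    refine monotoneOn_of_deriv_nonneg (convex_Icc a r)
      (hc.mono (Icc_subset_Icc_left haI.1)) ?_ ?_
    · rw [interior_Icc]
      exact fun s hs => (hd s (hsub s hs)).differentiableAt.differentiableWithinAt
    · rw [interior_Icc]
      intro s hs
      rw [(hd s (hsub s hs)).deriv]
      refine hb s (hsub s hs) ?_
      by_contra hneg
      exact absurd (hmax ⟨⟨(hsub s hs).1.le, hs.2.le⟩, not_lt.1 hneg⟩) (not_le.2 hs.1)
  exact le_trans ha0 (hmono ⟨le_rfl, haI.2⟩ ⟨haI.2, le_rfl⟩ haI.2)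

/-! ### The cut-off steady state equation -/

/-- The normalised mass `m(r) / r³ = 4π ∫₀¹ t² G(y(rt)) dt` for the density `G ∘ y`. In this form
it is manifestly continuous at the centre `r = 0`. -/
noncomputable def meanDensity (G y : ℝ → ℝ) (s : ℝ) : ℝ :=
  4 * π * ∫ t in (0:ℝ)..1, t ^ 2 * G (y (s * t))

/-- The steady state vector field `-y'` for density `G ∘ y` and pressure `G ∘ y - 1`, with the
denominator `1 - 2m/r` cut off from below at `δ`. -/
noncomputable def cutoffField (G : ℝ → ℝ) (δ : ℝ) (y : ℝ → ℝ) (s : ℝ) : ℝ :=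
  s * (meanDensity G y s + 4 * π * (G (y s) - 1)) / max (1 - 2 * (s ^ 2 * meanDensity G y s)) δ

section

variable {G y z : ℝ → ℝ} {B L δ : ℝ}

lemma continuous_meanDensity (hG : Continuous G) (hy : Continuous y) :
    Continuous (meanDensity G y) := by
  unfold meanDensity
  refine continuous_const.mul ?_
  apply intervalIntegral.continuous_parametric_intervalIntegral_of_continuous'
  fun_prop

lemma continuous_cutoffField (hG : Continuous G) (hy : Continuous y) (hδ : 0 < δ) :
    Continuous (cutoffField G δ y) := by
  have := continuous_meanDensity hG hy
  unfold cutoffField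
  refine Continuous.div (by fun_prop) (by fun_prop) fun s => ?_
  exact (lt_max_of_lt_right hδ).ne'

lemma meanDensity_ge (hG : Continuous G) (hy : Continuous y) (h1 : ∀ x, 1 ≤ G x) (s : ℝ) :
    4 * π / 3 ≤ meanDensity G y s := by
  have h : ∫ t in (0:ℝ)..1, t ^ 2 ≤ ∫ t in (0:ℝ)..1, t ^ 2 * G (y (s * t)) := by
    refine intervalIntegral.integral_mono_on zero_le_one
      ((by fun_prop : Continuous fun t : ℝ => t ^ 2).intervalIntegrable _ _)
      ((by fun_prop : Continuous fun t : ℝ => t ^ 2 * G (y (s * t))).intervalIntegrable _ _)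
      fun t _ => ?_
    nlinarith [sq_nonneg t, h1 (y (s * t))]
  rw [integral_pow] at h
  unfold meanDensity
  norm_num at h
  nlinarith [pi_pos]

lemma meanDensity_le (hG : Continuous G) (hy : Continuous y) (hB : ∀ x, G x ≤ B) (s : ℝ) :
    meanDensity G y s ≤ 4 * π / 3 * B := by
  have h : ∫ t in (0:ℝ)..1, t ^ 2 * G (y (s * t)) ≤ ∫ t in (0:ℝ)..1, t ^ 2 * B := by
    refine intervalIntegral.integral_mono_on zero_le_one
      ((by fun_prop : Continuous fun t : ℝ => t ^ 2 * G (y (s * t))).intervalIntegrable _ _)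
      ((by fun_prop : Continuous fun t : ℝ => t ^ 2 * B).intervalIntegrable _ _)
      fun t _ => ?_
    nlinarith [sq_nonneg t, hB (y (s * t))]
  rw [intervalIntegral.integral_mul_const, integral_pow] at h
  unfold meanDensity
  norm_num at h
  nlinarith [pi_pos]

lemma meanDensity_sub_le (hG : Continuous G) (hy : Continuous y) (hz : Continuous z)
    (hL0 : 0 ≤ L) (hL : ∀ a b, |G a - G b| ≤ L * |a - b|) {s D : ℝ} (hs : 0 ≤ s)
    (hD : ∀ t ∈ Icc (0:ℝ) s, |y t - z t| ≤ D) :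
    |meanDensity G y s - meanDensity G z s| ≤ 4 * π * (L * D) := by
  have hi : ∀ w : ℝ → ℝ, Continuous w →
      IntervalIntegrable (fun t : ℝ => t ^ 2 * G (w (s * t))) volume 0 1 := fun w hw =>
    (by fun_prop : Continuous fun t : ℝ => t ^ 2 * G (w (s * t))).intervalIntegrable _ _
  have h : |∫ t in (0:ℝ)..1, (t ^ 2 * G (y (s * t)) - t ^ 2 * G (z (s * t)))| ≤ L * D := by
    have := intervalIntegral.norm_integral_le_of_norm_le_const (a := (0:ℝ)) (b := 1) (C := L * D)
      (f := fun t => t ^ 2 * G (y (s * t)) - t ^ 2 * G (z (s * t))) ?_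
    · simpa using this
    · intro t ht
      rw [uIoc_of_le zero_le_one] at ht
      have hst : s * t ∈ Icc 0 s := ⟨mul_nonneg hs ht.1.le, mul_le_of_le_one_right hs ht.2⟩
      have h1 := (hL (y (s * t)) (z (s * t))).trans (mul_le_mul_of_nonneg_left (hD _ hst) hL0)
      rw [← mul_sub, Real.norm_eq_abs, abs_mul, abs_of_nonneg (sq_nonneg t)]
      have ht2 : t ^ 2 ≤ 1 := pow_le_one₀ ht.1.le ht.2
      nlinarith [abs_nonneg (G (y (s * t)) - G (z (s * t)))]
  rw [intervalIntegral.integral_sub (hi y hy) (hi z hz)] at h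
  unfold meanDensity
  rw [← mul_sub, abs_mul, abs_of_pos (by positivity : 0 < 4 * π)]
  exact mul_le_mul_of_nonneg_left h (by positivity)

lemma cutoffField_sub_le (hG : Continuous G) (hy : Continuous y) (hz : Continuous z)
    (h1 : ∀ x, 1 ≤ G x) (hB : ∀ x, G x ≤ B)
    (hL0 : 0 ≤ L) (hL : ∀ a b, |G a - G b| ≤ L * |a - b|) (hδ : 0 < δ)
    {s D : ℝ} (hs : s ∈ Icc (0:ℝ) 1) (hD : ∀ t ∈ Icc (0:ℝ) s, |y t - z t| ≤ D) :
    |cutoffField G δ y s - cutoffField G δ z s|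
      ≤ (8 * π * L / δ + 64 * π ^ 2 * B * L / δ ^ 2) * D := by
  have hD0 : 0 ≤ D := (abs_nonneg _).trans (hD 0 ⟨le_rfl, hs.1⟩)
  have hLD : 0 ≤ L * D := mul_nonneg hL0 hD0
  have hμ := meanDensity_sub_le hG hy hz hL0 hL hs.1 hD
  have hμz := meanDensity_le hG hz hB s
  have hμz0 := meanDensity_ge hG hz h1 s
  have hg := (hL (y s) (z s)).trans (mul_le_mul_of_nonneg_left (hD s ⟨hs.1, le_rfl⟩) hL0)
  have hz1 := h1 (z s)
  have hzB := hB (z s)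
  have hB1 : 1 ≤ B := hz1.trans hzB
  unfold cutoffField
  set μ := meanDensity G y s
  set ν := meanDensity G z s
  set X := max (1 - 2 * (s ^ 2 * μ)) δ with hX
  set Z := max (1 - 2 * (s ^ 2 * ν)) δ with hZ
  have hXδ : δ ≤ X := le_max_right _ _
  have hZδ : δ ≤ Z := le_max_right _ _
  have hX0 : 0 < X := hδ.trans_le hXδ
  have hZ0 : 0 < Z := hδ.trans_le hZδ
  set N := s * (μ + 4 * π * (G (y s) - 1))
  set P := s * (ν + 4 * π * (G (z s) - 1))
  have hpi := pi_pos
  have hNP : |N - P| ≤ 8 * π * L * D := by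
    have : N - P = s * ((μ - ν) + 4 * π * (G (y s) - G (z s))) := by simp only [N, P]; ring
    rw [this, abs_mul, abs_of_nonneg hs.1]
    have h2 : |(μ - ν) + 4 * π * (G (y s) - G (z s))| ≤ 8 * π * L * D := by
      refine (abs_add_le _ _).trans ?_
      rw [abs_mul, abs_of_pos (by positivity : 0 < 4 * π)]
      nlinarith
    calc _ ≤ 1 * |(μ - ν) + 4 * π * (G (y s) - G (z s))| :=
          mul_le_mul_of_nonneg_right hs.2 (abs_nonneg _)
      _ ≤ _ := by rw [one_mul]; exact h2
  have hP : |P| ≤ 8 * π * B := by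
    rw [abs_mul, abs_of_nonneg hs.1]
    have h2 : |ν + 4 * π * (G (z s) - 1)| ≤ 8 * π * B := by
      rw [abs_of_nonneg (by nlinarith)]
      nlinarith
    calc _ ≤ 1 * |ν + 4 * π * (G (z s) - 1)| :=
          mul_le_mul_of_nonneg_right hs.2 (abs_nonneg _)
      _ ≤ _ := by rw [one_mul]; exact h2
  have hXZ : |Z - X| ≤ 8 * π * (L * D) := by
    have h2 : |Z - X| ≤ |(1 - 2 * (s ^ 2 * ν)) - (1 - 2 * (s ^ 2 * μ))| :=
      abs_max_sub_max_le_abs _ _ _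
    refine h2.trans ?_
    have : (1 - 2 * (s ^ 2 * ν)) - (1 - 2 * (s ^ 2 * μ)) = 2 * s ^ 2 * (μ - ν) := by ring
    rw [this, abs_mul, abs_of_nonneg (by positivity)]
    have : s ^ 2 ≤ 1 := pow_le_one₀ hs.1 hs.2
    nlinarith [abs_nonneg (μ - ν)]
  have hsplit : N / X - P / Z = (N - P) / X + P * (Z - X) / (X * Z) := by
    field_simp; ring
  rw [hsplit]
  calc |(N - P) / X + P * (Z - X) / (X * Z)|
      ≤ |(N - P) / X| + |P * (Z - X) / (X * Z)| := abs_add_le _ _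
    _ = |N - P| / X + |P| * |Z - X| / (X * Z) := by
        rw [abs_div, abs_div, abs_mul, abs_of_pos hX0, abs_of_pos (mul_pos hX0 hZ0)]
    _ ≤ 8 * π * L * D / δ + (8 * π * B) * (8 * π * (L * D)) / (δ * δ) := by
        gcongr
    _ = _ := by field_simp; ring

lemma mass_eq (G y : ℝ → ℝ) (s : ℝ) :
    4 * π * ∫ t in (0:ℝ)..s, t ^ 2 * G (y t) = s ^ 3 * meanDensity G y s := by
  have h := intervalIntegral.mul_integral_comp_mul_left (a := 0) (b := 1)
    (f := fun t => t ^ 2 * G (y t)) (c := s)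
  rw [mul_zero, mul_one] at h
  rw [← h]
  have : ∀ t : ℝ, (s * t) ^ 2 * G (y (s * t)) = s ^ 2 * (t ^ 2 * G (y (s * t))) := fun t => by ring
  simp only [this, intervalIntegral.integral_const_mul]
  unfold meanDensity
  ring

/-- The derivative of `1 - 2m/r`, written as `1 - 2r²(m/r³)`. -/
lemma hasDerivAt_metric (hG : Continuous G) (hy : Continuous y) {s : ℝ} (hs : 0 < s) :
    HasDerivAt (fun s => 1 - 2 * (s ^ 2 * meanDensity G y s))
      (2 * s * meanDensity G y s - 8 * π * s * G (y s)) s := by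
  have hc : Continuous fun t : ℝ => t ^ 2 * G (y t) := by fun_prop
  have hm : HasDerivAt (fun s => 4 * π * ∫ t in (0:ℝ)..s, t ^ 2 * G (y t))
      (4 * π * (s ^ 2 * G (y s))) s :=
    (intervalIntegral.integral_hasDerivAt_right (hc.intervalIntegrable _ _)
      (hc.stronglyMeasurableAtFilter _ _) hc.continuousAt).const_mul _
  have hq := ((hm.div (hasDerivAt_id s) hs.ne').const_mul 2).const_sub 1
  have hq' := hq.congr_of_eventuallyEq (f₁ := fun s => 1 - 2 * (s ^ 2 * meanDensity G y s)) ?_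
  · refine hq'.congr_deriv ?_
    rw [mass_eq]
    simp only [id]
    field_simp
    ring
  · filter_upwards [lt_mem_nhds hs] with t ht
    simp only [Pi.div_apply, id, mass_eq]
    field_simp

end

/-! ### The fluid region -/

/-- The fluid region: a solution of the steady state equation that reaches the boundary value `0`
at some radius `R`, with `1 - 2m/r > 0` up to and including `R`. -/
lemma exists_interior (κ : ℝ) (hκ : 0 < κ) :
    ∃ (G y : ℝ → ℝ) (R : ℝ), 0 < R ∧ Continuous G ∧ Continuous y ∧ y 0 = κ ∧ y R = 0 ∧
      (∀ x ∈ Icc 0 κ, G x = (exp (2 * x) + 1) / 2) ∧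
      (∀ r ∈ Icc 0 R, y r ∈ Icc 0 κ) ∧ 0 < meanDensity G y R ∧
      ∀ r ∈ Ioc 0 R, 0 < 1 - 2 * (r ^ 2 * meanDensity G y r) ∧
        HasDerivAt y (-(r * (meanDensity G y r + 4 * π * (G (y r) - 1))
          / (1 - 2 * (r ^ 2 * meanDensity G y r)))) r := by
  set G : ℝ → ℝ := fun x => (exp (2 * max 0 (min x κ)) + 1) / 2 with hGdef
  have hG : Continuous G := by fun_prop
  set B : ℝ := (exp (2 * κ) + 1) / 2 with hBdef
  have hclamp : ∀ x, max 0 (min x κ) ∈ Icc 0 κ := fun x =>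
    ⟨le_max_left _ _, max_le hκ.le (min_le_right _ _)⟩
  have h1 : ∀ x, 1 ≤ G x := fun x => by
    have : 1 ≤ exp (2 * max 0 (min x κ)) := one_le_exp (by linarith [(hclamp x).1])
    simp only [hGdef]; linarith
  have hB : ∀ x, G x ≤ B := fun x => by
    have : exp (2 * max 0 (min x κ)) ≤ exp (2 * κ) := exp_le_exp.2 (by linarith [(hclamp x).2])
    simp only [hGdef, hBdef]; linarith
  have hB1 : 1 ≤ B := (h1 0).trans (hB 0)
  have hL : ∀ a b, |G a - G b| ≤ exp (2 * κ) * |a - b| := by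
    intro a b
    have hexp : ∀ u ∈ Icc 0 κ, ∀ v ∈ Icc 0 κ,
        |(exp (2 * u) + 1) / 2 - (exp (2 * v) + 1) / 2| ≤ exp (2 * κ) * |u - v| := by
      intro u hu v hv
      have hd : ∀ x ∈ Icc 0 κ, HasDerivWithinAt (fun x => (exp (2 * x) + 1) / 2)
          (exp (2 * x)) (Icc 0 κ) x := fun x _ => by
        have := ((((hasDerivAt_id x).const_mul 2).exp.add_const 1).div_const 2)
        refine (this.congr_deriv ?_).hasDerivWithinAt
        simp
      have := (convex_Icc 0 κ).norm_image_sub_le_of_norm_hasDerivWithin_le hd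
        (C := exp (2 * κ)) (fun x hx => by
          rw [Real.norm_eq_abs, abs_exp]
          exact exp_le_exp.2 (by linarith [hx.2])) hv hu
      simpa [Real.norm_eq_abs] using this
    refine (hexp _ (hclamp a) _ (hclamp b)).trans ?_
    refine mul_le_mul_of_nonneg_left ?_ (exp_pos _).le
    have h2 := abs_max_sub_max_le_max 0 (min a κ) 0 (min b κ)
    have h3 := abs_min_sub_min_le_max a κ b κ
    rw [sub_self, abs_zero] at h2 h3
    exact h2.trans (max_le (abs_nonneg _) (h3.trans (max_le le_rfl (abs_nonneg _))))
  -- `δ` is the value at `y = 0` of the barrier `exp (6B(y - κ))` for `1 - 2m/r`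
  set δ : ℝ := exp (6 * B * (0 - κ)) with hδdef
  have hδ : 0 < δ := exp_pos _
  obtain ⟨y, hy, hyeq⟩ := volterra_fixed_point (fun y s => -cutoffField G δ y s) κ
    (8 * π * exp (2 * κ) / δ + 64 * π ^ 2 * B * exp (2 * κ) / δ ^ 2) (by positivity)
    (fun y hy => (continuous_cutoffField hG hy hδ).neg)
    (fun y z hy hz s hs D hD => by
      rw [neg_sub_neg, abs_sub_comm]
      exact cutoffField_sub_le hG hy hz h1 hB (exp_pos _).le hL hδ hs hD)
  have hΦ : Continuous (fun s => -cutoffField G δ y s) := (continuous_cutoffField hG hy hδ).neg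
  have hy0 : y 0 = κ := by rw [hyeq 0 ⟨le_rfl, zero_le_one⟩]; simp
  have hyd : ∀ r ∈ Ioo (0:ℝ) 1, HasDerivAt y (-cutoffField G δ y r) r := by
    intro r hr
    have h : HasDerivAt (fun r => κ + ∫ s in (0:ℝ)..r, -cutoffField G δ y s)
        (-cutoffField G δ y r) r :=
      (intervalIntegral.integral_hasDerivAt_right (hΦ.intervalIntegrable _ _)
        (hΦ.stronglyMeasurableAtFilter _ _) hΦ.continuousAt).const_add κ
    refine h.congr_of_eventuallyEq ?_
    filter_upwards [Ioo_mem_nhds hr.1 hr.2] with t ht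
    exact hyeq t ⟨ht.1.le, ht.2.le⟩
  have hpi := pi_pos
  have hμ := meanDensity_ge hG hy h1
  have hnn : ∀ s, 0 ≤ s → 0 ≤ cutoffField G δ y s := by
    intro s hs
    have := hμ s
    have h4 := mul_nonneg (by positivity : 0 ≤ 4 * π) (sub_nonneg.2 (h1 (y s)))
    unfold cutoffField
    refine div_nonneg (mul_nonneg hs ?_) (le_max_of_le_right hδ.le)
    linarith
  have hanti : AntitoneOn y (Icc 0 1) := by
    refine antitoneOn_of_deriv_nonpos (convex_Icc 0 1) hy.continuousOn ?_ ?_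
    · rw [interior_Icc]
      exact fun s hs => (hyd s hs).differentiableAt.differentiableWithinAt
    · rw [interior_Icc]
      intro s hs
      rw [(hyd s hs).deriv]
      linarith [hnn s hs.1.le]
  set x : ℝ → ℝ := fun s => 1 - 2 * (s ^ 2 * meanDensity G y s) with hxdef
  have hxc : Continuous x := by
    have := continuous_meanDensity hG hy
    fun_prop
  have hbar : ∀ r ∈ Icc (0:ℝ) 1, 0 ≤ y r → δ ≤ x r := by
    intro r hr hyr
    have hyn : ∀ s ∈ Icc 0 r, 0 ≤ y s := fun s hs =>
      hyr.trans (hanti ⟨hs.1, hs.2.trans hr.2⟩ hr hs.2)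
    have hE : ∀ s ∈ Icc 0 r, δ ≤ exp (6 * B * (y s - κ)) := fun s hs =>
      exp_le_exp.2 (mul_le_mul_of_nonneg_left (by linarith [hyn s hs]) (by linarith))
    have h := nonneg_of_barrier (φ := fun s => x s - exp (6 * B * (y s - κ)))
      (φ' := fun s => (2 * s * meanDensity G y s - 8 * π * s * G (y s))
        - exp (6 * B * (y s - κ)) * (6 * B * (-cutoffField G δ y s))) hr.1
      (by fun_prop) (by simp [hxdef, hy0]) ?_ ?_
    · linarith [hE r ⟨hr.1, le_rfl⟩]
    · intro s hs
      have hs1 : s ∈ Ioo (0:ℝ) 1 := ⟨hs.1, hs.2.trans_le hr.2⟩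
      exact (hasDerivAt_metric hG hy hs.1).sub
        ((((hyd s hs1).sub_const κ).const_mul (6 * B)).exp)
    · intro s hs hneg
      have hX : max (x s) δ ≤ exp (6 * B * (y s - κ)) :=
        max_le (by linarith) (hE s ⟨hs.1.le, hs.2.le⟩)
      have hX0 : 0 < max (x s) δ := lt_max_of_lt_right hδ
      have hc : cutoffField G δ y s * max (x s) δ
          = s * (meanDensity G y s + 4 * π * (G (y s) - 1)) := by
        unfold cutoffField
        exact div_mul_cancel₀ _ hX0.ne'
      have hc0 := hnn s hs.1.le
      have hm := hμ s
      have hlow : s * (4 * π / 3) ≤ cutoffField G δ y s * exp (6 * B * (y s - κ)) := by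
        refine le_trans ?_ (mul_le_mul_of_nonneg_left hX hc0)
        rw [hc]
        refine mul_le_mul_of_nonneg_left ?_ hs.1.le
        have h4 := mul_nonneg (by positivity : 0 ≤ 4 * π) (sub_nonneg.2 (h1 (y s)))
        linarith
      have h5 : 6 * B * (s * (4 * π / 3))
          ≤ 6 * B * (cutoffField G δ y s * exp (6 * B * (y s - κ))) :=
        mul_le_mul_of_nonneg_left hlow (by linarith)
      have h6 : 8 * π * s * G (y s) ≤ 8 * π * s * B :=
        mul_le_mul_of_nonneg_left (hB _) (by have := hs.1; positivity)
      have h7 : 0 ≤ 2 * s * meanDensity G y s :=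
        mul_nonneg (by linarith [hs.1]) (by linarith)
      show 0 ≤ _ - _
      linarith
  -- at `r = 1` the bound `ρ ≥ 1` already gives `2m/r ≥ 8π/3 > 1`
  have hy1 : y 1 < 0 := by
    by_contra hcon
    have := hbar 1 ⟨zero_le_one, le_rfl⟩ (not_lt.1 hcon)
    have h2 := hμ 1
    simp only [hxdef] at this
    linarith [pi_gt_three]
  obtain ⟨R, hRI, hR⟩ : (0:ℝ) ∈ y '' Ioo 0 1 :=
    intermediate_value_Ioo' zero_le_one hy.continuousOn ⟨hy1, by rw [hy0]; exact hκ⟩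
  have hmem : ∀ r ∈ Icc 0 R, r ∈ Icc (0:ℝ) 1 := fun r hr => ⟨hr.1, hr.2.trans hRI.2.le⟩
  have hR1 : R ∈ Icc (0:ℝ) 1 := ⟨hRI.1.le, hRI.2.le⟩
  have hrange : ∀ r ∈ Icc 0 R, y r ∈ Icc 0 κ := fun r hr =>
    ⟨by rw [← hR]; exact hanti (hmem r hr) hR1 hr.2,
      by rw [← hy0]; exact hanti ⟨le_rfl, zero_le_one⟩ (hmem r hr) hr.1⟩
  refine ⟨G, y, R, hRI.1, hG, hy, hy0, hR, ?_, hrange, by linarith [hμ R], ?_⟩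
  · intro x hx
    simp only [hGdef]
    rw [min_eq_left hx.2, max_eq_right hx.1]
  · intro r hr
    have hr' : r ∈ Icc 0 R := ⟨hr.1.le, hr.2⟩
    have hb := hbar r (hmem r hr') (hrange r hr').1
    refine ⟨hδ.trans_le hb, ?_⟩
    have := hyd r ⟨hr.1, hr.2.trans_lt hRI.2⟩
    unfold cutoffField at this
    rwa [max_eq_left hb] at this

/-! ### Gluing to the vacuum exterior -/

/-- Global existence of the steady state: for every central redshift `κ > 0` the
solution of the steady state equation with `ȳ(0) = κ` extends to `[0, ∞)`; in
particular `1 − 2m(r)/r > 0` for all `r > 0`, so the equation is defined for all `r`. -/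
theorem global_existence_steady_state (κ : ℝ) (hκ : 0 < κ) :
    ∃ y : ℝ → ℝ, ContinuousOn y (Set.Ici 0) ∧ y 0 = κ ∧
      ∀ r > (0:ℝ), 0 < 1 - 2 * mfun y r / r ∧ HasDerivAt y (steadyRHS y r) r := by
  obtain ⟨G, y, R, hR, hG, hy, hy0, hyR, hGe, hrange, hμR, hsol⟩ := exists_interior κ hκ
  set M : ℝ := R ^ 3 * meanDensity G y R with hM
  have hM0 : 0 < M := by positivity
  have hpos : ∀ r, R ≤ r → 0 < 1 - 2 * M / r := by
    intro r hr
    have h1 : 0 < 1 - 2 * M / R := by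
      have := (hsol R ⟨hR, le_rfl⟩).1
      have h2 : 2 * M / R = 2 * (R ^ 2 * meanDensity G y R) := by rw [hM]; field_simp
      rwa [h2]
    have h3 : 2 * M / r ≤ 2 * M / R := by gcongr
    linarith
  -- the Schwarzschild exterior of mass `M`, vanishing at `R`
  set v : ℝ → ℝ := fun r => (log (1 - 2 * M / R) - log (1 - 2 * M / r)) / 2 with hv
  have hvR : v R = 0 := by simp [hv]
  have hvneg : ∀ r, R < r → v r < 0 := by
    intro r hr
    have : log (1 - 2 * M / R) < log (1 - 2 * M / r) := by
      refine log_lt_log (hpos R le_rfl) ?_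
      have : 2 * M / r < 2 * M / R := by gcongr
      linarith
    simp only [hv]; linarith
  have hvd : ∀ r, R ≤ r → HasDerivAt v (-(1 / (1 - 2 * M / r)) * (M / r ^ 2)) r := by
    intro r hr
    have hr0 : r ≠ 0 := (hR.trans_le hr).ne'
    have hp := (hpos r hr).ne'
    have h := ((((((hasDerivAt_inv hr0).const_mul (2 * M)).const_sub 1).log
      (by rwa [← div_eq_mul_inv])).const_sub (log (1 - 2 * M / R))).div_const 2)
    simp only [← div_eq_mul_inv] at h
    refine h.congr_deriv ?_
    field_simp
  set Y : ℝ → ℝ := fun r => if r ≤ R then y r else v r with hY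
  have hYl : ∀ r ≤ R, Y r = y r := fun r hr => if_pos hr
  have hYr : ∀ r, R ≤ r → Y r = v r := by
    intro r hr
    rcases hr.eq_or_lt with rfl | h
    · rw [hYl _ le_rfl, hyR, hvR]
    · exact if_neg (not_le.2 h)
  have hgY : ∀ r ∈ Icc 0 R, gfun (Y r) = G (y r) := by
    intro r hr
    rw [hYl r hr.2, hGe _ (hrange r hr), gfun, if_pos (hrange r hr).1]
  have hhY : ∀ r ∈ Icc 0 R, hfun (Y r) = G (y r) - 1 := by
    intro r hr
    rw [hYl r hr.2, hGe _ (hrange r hr), hfun, if_pos (hrange r hr).1]; ring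
  have hml : ∀ r ∈ Icc 0 R, mfun Y r = r ^ 3 * meanDensity G y r := by
    intro r hr
    rw [← mass_eq, mfun]
    congr 1
    refine intervalIntegral.integral_congr fun t ht => ?_
    rw [uIcc_of_le hr.1] at ht
    simp only [hgY t ⟨ht.1, ht.2.trans hr.2⟩]
  have hmr : ∀ r, R ≤ r → mfun Y r = M := by
    intro r hr
    rw [hM, ← hml R ⟨hR.le, le_rfl⟩, mfun, mfun]
    congr 1
    have hcG : Continuous fun t : ℝ => t ^ 2 * G (y t) := by fun_prop
    have hi1 : IntervalIntegrable (fun t => t ^ 2 * gfun (Y t)) volume 0 R := by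
      refine (hcG.intervalIntegrable 0 R).congr fun t ht => ?_
      rw [uIoc_of_le hR.le] at ht
      simp only [hgY t ⟨ht.1.le, ht.2⟩]
    have hz : ∀ t ∈ uIoc R r, (fun _ : ℝ => (0:ℝ)) t = t ^ 2 * gfun (Y t) := by
      intro t ht
      rw [uIoc_of_le hr] at ht
      rw [hYr t ht.1.le, gfun, if_neg (not_le.2 (hvneg t ht.1)), mul_zero]
    have hi2 : IntervalIntegrable (fun t => t ^ 2 * gfun (Y t)) volume R r :=
      (intervalIntegrable_const (c := (0:ℝ))).congr hz
    have hzero : ∫ t in R..r, t ^ 2 * gfun (Y t) = 0 :=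
      intervalIntegral.integral_zero_ae (ae_of_all _ fun t ht => (hz t ht).symm)
    rw [← intervalIntegral.integral_add_adjacent_intervals hi1 hi2, hzero, add_zero]
  have hhr : ∀ r, R ≤ r → hfun (Y r) = 0 := by
    intro r hr
    rcases hr.eq_or_lt with rfl | h
    · rw [hYl _ le_rfl, hyR, hfun]; simp
    · rw [hYr r hr, hfun, if_neg (not_le.2 (hvneg r h))]
  have hrhsl : ∀ r ∈ Ioc 0 R, steadyRHS Y r
      = -(r * (meanDensity G y r + 4 * π * (G (y r) - 1))
          / (1 - 2 * (r ^ 2 * meanDensity G y r))) := by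
    intro r hr
    have hr0 := hr.1.ne'
    rw [steadyRHS, hml r ⟨hr.1.le, hr.2⟩, hhY r ⟨hr.1.le, hr.2⟩]
    have e1 : 2 * (r ^ 3 * meanDensity G y r) / r = 2 * (r ^ 2 * meanDensity G y r) := by
      field_simp
    have e2 : r ^ 3 * meanDensity G y r / r ^ 2 = r * meanDensity G y r := by
      field_simp
    rw [e1, e2]
    ring
  have hrhsr : ∀ r, R ≤ r → steadyRHS Y r = -(1 / (1 - 2 * M / r)) * (M / r ^ 2) := by
    intro r hr
    rw [steadyRHS, hmr r hr, hhr r hr, mul_zero, add_zero]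
  have hdl : ∀ r ∈ Ioc 0 R, HasDerivWithinAt Y (steadyRHS Y r) (Iic R) r := by
    intro r hr
    rw [hrhsl r hr]
    exact (hsol r hr).2.hasDerivWithinAt.congr (fun t ht => hYl t ht) (hYl r hr.2)
  have hdr : ∀ r, R ≤ r → HasDerivWithinAt Y (steadyRHS Y r) (Ici R) r := by
    intro r hr
    rw [hrhsr r hr]
    exact (hvd r hr).hasDerivWithinAt.congr (fun t ht => hYr t ht) (hYr r hr)
  have hder : ∀ r > (0:ℝ), HasDerivAt Y (steadyRHS Y r) r := by
    intro r hr
    rcases lt_trichotomy r R with h | h | h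
    · exact (hdl r ⟨hr, h.le⟩).hasDerivAt (Iic_mem_nhds h)
    · have := (hdl r ⟨hr, h.le⟩).union (hdr r h.ge)
      rwa [Iic_union_Ici, hasDerivWithinAt_univ] at this
    · exact (hdr r h.le).hasDerivAt (Ici_mem_nhds h)
  refine ⟨Y, ?_, by rw [hYl 0 hR.le, hy0], fun r hr => ⟨?_, hder r hr⟩⟩
  · intro r hr
    rcases (mem_Ici.1 hr).eq_or_lt with h | h
    · refine ContinuousAt.continuousWithinAt (hy.continuousAt.congr ?_)
      filter_upwards [gt_mem_nhds (h ▸ hR : r < R)] with t ht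
      exact (hYl t ht.le).symm
    · exact (hder r h).continuousAt.continuousWithinAt
  · rcases le_total r R with h | h
    · rw [hml r ⟨hr.le, h⟩]
      have e1 : 2 * (r ^ 3 * meanDensity G y r) / r = 2 * (r ^ 2 * meanDensity G y r) := by
        field_simp
      rw [e1]
      exact (hsol r ⟨hr, h⟩).1
    · rw [hmr r h]
      exact hpos r h
end

section
/- There exists a constant C > 0 such that for all κ > 0 and all r ≥ 0 at which both solutions are defined and nonnegative, the hard phase pressure solution p_κ and the massless pressure solution p*_κ satisfy |p_κ(r) − p*_κ(r)| ≤ C e^{6κ}(r² + e^{4κ} r⁴) exp(C(e^{4κ} r² + e^{8κ} r⁴)). -/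
open Real MeasureTheory Set

/-!
Both equations are Tolman–Oppenheimer–Volkoff equations `p' = -(2p + c) r w / D` for the equation of
state `ρ = p + c`, with `m = 4π ∫₀^r s²ρ`, `w = m/r³ + 4πp` and `D = 1 - 2m/r`.

The main point is a lower bound on `D` which does not depend on the central pressure, as in
Buchdahl's inequality. As long as `D > 0` the pressure decreases, hence so does the mean density
`a = m/r³`. The quantity `u = r²w/√D` satisfies `u' = r²a'/√D + (u/r)(2 - u/√D)`, and since `a' ≤ 0`
and `D < 1`, it can never cross the value `2` (`IsSol.force_bound`, stated without square roots).
Thus `(1 - D)/2 = a r² ≤ w r² ≤ 2√D`, which forces `D ≥ 1/20`, and by continuity `D` never gets to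
`0` (`IsSol.metricDen_ge`).

Consequently both pressures decrease from `P = e^{4κ}`, and their derivatives at `r` differ by at
most `K (2Pr + 4P²r³)(1 + sup_{[0,r]} |p - p*|)` (`deriv_diff_le`). A Grönwall argument
(`diff_lt_barrier`) gives `|p - p*| < (1 + ε) e^{Kg} - 1` with `g = Pr² + P²r⁴`; the theorem
follows on taking `ε = g(r)`, because `(1 + g) e^{Kg} - 1 ≤ (K+1) g e^{(K+1)g}` and
`g = P (r² + P r⁴) ≤ e^{6κ} (r² + P r⁴)`.
-/

/-- Hard phase density in terms of pressure: `S(p) = p + 1` (since `ρ = p + 1`). -/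
noncomputable def Shard (x : ℝ) : ℝ := x + 1

/-- Right hand side of the hard phase steady state pressure equation
`p′(r) = −((S(p)+p)/(1 − (8π/r)∫₀^r s²S(p)))((4π/r²)∫₀^r s²S(p) + 4π r p)`. -/
noncomputable def rhsHard (p : ℝ → ℝ) (r : ℝ) : ℝ :=
  -((Shard (p r) + p r) / (1 - (8 * Real.pi / r) * ∫ s in (0:ℝ)..r, s^2 * Shard (p s))) *
    ((4 * Real.pi / r^2) * (∫ s in (0:ℝ)..r, s^2 * Shard (p s)) + 4 * Real.pi * r * p r)

/-- Right hand side of the massless pressure equation (with `S*(p) = p`):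
`p′(r) = −(2p/(1 − (8π/r)∫₀^r s²p))((4π/r²)∫₀^r s²p + 4π r p)`. -/
noncomputable def rhsStar (p : ℝ → ℝ) (r : ℝ) : ℝ :=
  -((2 * p r) / (1 - (8 * Real.pi / r) * ∫ s in (0:ℝ)..r, s^2 * p s)) *
    ((4 * Real.pi / r^2) * (∫ s in (0:ℝ)..r, s^2 * p s) + 4 * Real.pi * r * p r)

/-! ### The equation for a general equation of state `ρ = p + c` -/

/-- The integral `∫₀^r s² (p(s) + c) ds`, i.e. the mass divided by `4π`, for the equation of state
`ρ = p + c`; `c = 1` is the hard phase and `c = 0` the massless case. -/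
noncomputable def massInt (c : ℝ) (p : ℝ → ℝ) (r : ℝ) : ℝ := ∫ s in (0:ℝ)..r, s^2 * (p s + c)

/-- The quotient `a(r) = m(r)/r³`, where `m = 4π ∫₀^r s² (p + c)` is the mass: up to a constant
factor, the mean density of the ball of radius `r`. -/
noncomputable def meanDens (c : ℝ) (p : ℝ → ℝ) (r : ℝ) : ℝ := 4 * π / r^3 * massInt c p r

/-- The metric coefficient `D(r) = 1 - 2m(r)/r`. -/
noncomputable def metricDen (c : ℝ) (p : ℝ → ℝ) (r : ℝ) : ℝ := 1 - 2 * meanDens c p r * r^2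

/-- The gravitational force divided by `r`: `w(r) = m(r)/r³ + 4πp(r)`. -/
noncomputable def force (c : ℝ) (p : ℝ → ℝ) (r : ℝ) : ℝ := meanDens c p r + 4 * π * p r

/-- `p` is a nonnegative solution on `[0, R]`, positive at the centre, of the pressure equation
`p' = -(2p + c) r w / D` for the equation of state `ρ = p + c`. -/
structure IsSol (c : ℝ) (p : ℝ → ℝ) (R : ℝ) : Prop where
  c_nonneg : 0 ≤ c
  cont : ContinuousOn p (Icc 0 R)
  pos_zero : 0 < p 0
  nonneg : ∀ r ∈ Ioo 0 R, 0 ≤ p r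
  deriv : ∀ r ∈ Ioo 0 R,
    HasDerivAt p (-((2 * p r + c) * r * force c p r / metricDen c p r)) r

namespace IsSol

variable {c R : ℝ} {p : ℝ → ℝ}

lemma nonneg' (h : IsSol c p R) {r : ℝ} (h0 : 0 ≤ r) (hR : r < R) : 0 ≤ p r := by
  rcases h0.eq_or_lt with rfl | h0
  · exact h.pos_zero.le
  · exact h.nonneg r ⟨h0, hR⟩

lemma contInt (h : IsSol c p R) : ContinuousOn (fun s => s^2 * (p s + c)) (Icc 0 R) :=
  (continuousOn_id.pow 2).mul (h.cont.add continuousOn_const)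

lemma intervalIntegrable (h : IsSol c p R) {r : ℝ} (hr : r ∈ Ioo 0 R) :
    IntervalIntegrable (fun s => s^2 * (p s + c)) volume 0 r := by
  apply ContinuousOn.intervalIntegrable
  rw [uIcc_of_le hr.1.le]
  exact h.contInt.mono (Icc_subset_Icc_right hr.2.le)

lemma hasDerivAt_massInt (h : IsSol c p R) {r : ℝ} (hr : r ∈ Ioo 0 R) :
    HasDerivAt (massInt c p) (r^2 * (p r + c)) r := by
  have hc : ContinuousOn (fun s => s^2 * (p s + c)) (Ioo 0 R) := h.contInt.mono Ioo_subset_Icc_self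
  exact intervalIntegral.integral_hasDerivAt_right (h.intervalIntegrable hr)
    (hc.stronglyMeasurableAtFilter isOpen_Ioo r hr) (hc.continuousAt (isOpen_Ioo.mem_nhds hr))

lemma massInt_pos (h : IsSol c p R) {r : ℝ} (hr : r ∈ Ioo 0 R) : 0 < massInt c p r := by
  apply intervalIntegral.integral_pos hr.1 (h.contInt.mono (Icc_subset_Icc_right hr.2.le))
  · intro x hx
    have := h.nonneg' hx.1.le (hx.2.trans_lt hr.2)
    have := h.c_nonneg
    positivity
  · have hR : 0 < R := hr.1.trans hr.2
    have h1 : ∀ᶠ x in nhdsWithin 0 (Ioi 0), 0 < p x := by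
      have h2 : Filter.Tendsto p (nhdsWithin 0 (Ioi 0)) (nhds (p 0)) :=
        (h.cont 0 ⟨le_rfl, hR.le⟩).mono_left
          (nhdsWithin_le_of_mem (Icc_mem_nhdsGT hR))
      exact h2.eventually (lt_mem_nhds h.pos_zero)
    obtain ⟨x, hx, hxr⟩ := (h1.and (Ioc_mem_nhdsGT hr.1)).exists
    refine ⟨x, ⟨hxr.1.le, hxr.2⟩, ?_⟩
    have := hxr.1
    have := h.c_nonneg
    positivity

lemma meanDens_pos (h : IsSol c p R) {r : ℝ} (hr : r ∈ Ioo 0 R) : 0 < meanDens c p r := by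
  have := h.massInt_pos hr
  have := hr.1
  unfold meanDens
  positivity

lemma force_pos (h : IsSol c p R) {r : ℝ} (hr : r ∈ Ioo 0 R) : 0 < force c p r := by
  have := h.meanDens_pos hr
  have := h.nonneg r hr
  unfold force
  positivity

lemma hasDerivAt_meanDens (h : IsSol c p R) {r : ℝ} (hr : r ∈ Ioo 0 R) :
    HasDerivAt (meanDens c p) ((4 * π * (p r + c) - 3 * meanDens c p r) / r) r := by
  have hr0 : r ≠ 0 := hr.1.ne'
  have h1 := (((hasDerivAt_const r (4 * π)).div (hasDerivAt_pow 3 r) (by positivity)).mul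
    (h.hasDerivAt_massInt hr))
  refine HasDerivAt.congr_deriv (f := meanDens c p) h1 ?_
  simp only [meanDens, Pi.div_apply]
  field_simp
  push_cast
  ring

lemma integral_sq_mul_const (k r : ℝ) : ∫ s in (0:ℝ)..r, s^2 * k = k * r^3 / 3 := by
  rw [intervalIntegral.integral_mul_const, integral_pow]
  norm_num
  ring

lemma meanDens_le (h : IsSol c p R) {r M : ℝ} (hr : r ∈ Ioo 0 R)
    (hM : ∀ s ∈ Icc 0 r, p s ≤ M) : meanDens c p r ≤ 4 * π / 3 * (M + c) := by
  have h1 : massInt c p r ≤ (M + c) * r^3 / 3 := by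
    rw [← integral_sq_mul_const]
    apply intervalIntegral.integral_mono_on hr.1.le (h.intervalIntegrable hr)
      (by apply Continuous.intervalIntegrable; fun_prop)
    intro x hx
    have := hM x hx
    gcongr
  have hr0 := hr.1
  unfold meanDens
  calc _ ≤ 4 * π / r^3 * ((M + c) * r^3 / 3) := by gcongr
    _ = _ := by field_simp

lemma le_meanDens (h : IsSol c p R) {r M : ℝ} (hr : r ∈ Ioo 0 R)
    (hM : ∀ s ∈ Icc 0 r, M ≤ p s) : 4 * π / 3 * (M + c) ≤ meanDens c p r := by
  have h1 : (M + c) * r^3 / 3 ≤ massInt c p r := by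
    rw [← integral_sq_mul_const]
    apply intervalIntegral.integral_mono_on hr.1.le
      (by apply Continuous.intervalIntegrable; fun_prop) (h.intervalIntegrable hr)
    intro x hx
    have := hM x hx
    gcongr
  have hr0 := hr.1
  unfold meanDens
  calc _ = 4 * π / r^3 * ((M + c) * r^3 / 3) := by field_simp
    _ ≤ _ := by gcongr

lemma antitoneOn (h : IsSol c p R) {b : ℝ} (hb : b ≤ R)
    (hD : ∀ r ∈ Ioo 0 b, 0 < metricDen c p r) : AntitoneOn p (Icc 0 b) := by
  have hmem : ∀ x ∈ Ioo 0 b, x ∈ Ioo 0 R := fun x hx => ⟨hx.1, hx.2.trans_le hb⟩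
  apply antitoneOn_of_deriv_nonpos (convex_Icc 0 b) (h.cont.mono (Icc_subset_Icc_right hb))
  · rw [interior_Icc]
    exact fun x hx => (h.deriv x (hmem x hx)).differentiableAt.differentiableWithinAt
  · rw [interior_Icc]
    intro x hx
    rw [(h.deriv x (hmem x hx)).deriv]
    have := hD x hx
    have := h.force_pos (hmem x hx)
    have := h.nonneg x (hmem x hx)
    have := h.c_nonneg
    have := hx.1
    rw [neg_nonpos]
    positivity

/-- Near the centre the bounds on `D` and on the force hold trivially, because `p` is bounded. -/
lemma exists_small (h : IsSol c p R) (hR : 0 < R) : ∃ d > 0, d ≤ R ∧ ∀ r ∈ Ioo 0 d,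
    1 / 2 < metricDen c p r ∧ r^4 * force c p r ^ 2 ≤ 4 * metricDen c p r := by
  obtain ⟨M, hM⟩ := isCompact_Icc.exists_bound_of_continuousOn h.cont
  have hM' : ∀ s ∈ Icc 0 R, p s ≤ M := fun s hs => (le_abs_self _).trans (hM s hs)
  have hM0 : 0 < M := h.pos_zero.trans_le (hM' 0 ⟨le_rfl, hR.le⟩)
  have hc := h.c_nonneg
  set W := 4 * π / 3 * (M + c) + 4 * π * M with hW
  have hW0 : 0 < W := by positivity
  refine ⟨min R (1 / (2 * (1 + W))), by positivity, min_le_left _ _, ?_⟩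
  intro r hr
  have hrR : r ∈ Ioo 0 R := ⟨hr.1, hr.2.trans_le (min_le_left _ _)⟩
  have hr2 : r < 1 / (2 * (1 + W)) := hr.2.trans_le (min_le_right _ _)
  rw [lt_div_iff₀ (by positivity)] at hr2
  have ha : meanDens c p r ≤ 4 * π / 3 * (M + c) :=
    h.meanDens_le hrR fun s hs => hM' s ⟨hs.1, hs.2.trans hrR.2.le⟩
  have hp : 4 * π * p r ≤ 4 * π * M := by
    have := hM' r ⟨hrR.1.le, hrR.2.le⟩
    gcongr
  have hpi : 0 < 4 * π * M := by positivity
  have hw : force c p r ≤ W := by unfold force; linarith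
  have haW : meanDens c p r ≤ W := by linarith
  have hr0 := hr.1
  have hw0 := h.force_pos hrR
  have e0 : 0 < r * W := by positivity
  have e1 : r * W < 1 / 2 := by nlinarith
  have e2 : r < 1 / 2 := by nlinarith
  have e3 : r^2 * W < 1 / 4 := by nlinarith
  have e4 : meanDens c p r * r^2 ≤ W * r^2 := by gcongr
  have hD : 1 / 2 < metricDen c p r := by unfold metricDen; linarith
  refine ⟨hD, ?_⟩
  have e5 : r^2 * force c p r ≤ r^2 * W := by gcongr
  have e6 : 0 < r^2 * force c p r := by positivity
  nlinarith

lemma hasDerivAt_force (h : IsSol c p R) {r : ℝ} (hr : r ∈ Ioo 0 R) :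
    HasDerivAt (force c p) ((4 * π * (p r + c) - 3 * meanDens c p r) / r +
      4 * π * -((2 * p r + c) * r * force c p r / metricDen c p r)) r :=
  (h.hasDerivAt_meanDens hr).add ((h.deriv r hr).const_mul _)

lemma hasDerivAt_metricDen (h : IsSol c p R) {r : ℝ} (hr : r ∈ Ioo 0 R) :
    HasDerivAt (metricDen c p) (-(2 * ((4 * π * (p r + c) - 3 * meanDens c p r) / r) * r^2 +
      2 * meanDens c p r * (2 * r))) r := by
  have h1 := ((h.hasDerivAt_meanDens hr).const_mul 2).mul (hasDerivAt_pow 2 r)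
  refine HasDerivAt.congr_deriv (h1.const_sub 1) ?_
  norm_num

/-! ### Lower bound on the metric coefficient -/

/-- Buchdahl's inequality in the form `r² w / √D ≤ 2`, as long as `D` stays positive. The quantity
`r⁴w² - 4D` is negative near the centre, and its derivative is negative wherever it vanishes. -/
lemma force_bound (h : IsSol c p R) {b : ℝ} (hb : b ≤ R)
    (hD : ∀ r ∈ Ioo 0 b, 0 < metricDen c p r) {x : ℝ} (hx : x ∈ Ioo 0 b) :
    x^4 * force c p x ^ 2 ≤ 4 * metricDen c p x := by
  have hmem : ∀ x ∈ Ioo 0 b, x ∈ Ioo 0 R := fun x hx => ⟨hx.1, hx.2.trans_le hb⟩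
  obtain ⟨d, hd0, hdR, hd⟩ := h.exists_small ((hmem x hx).1.trans (hmem x hx).2)
  set e := min (d / 2) x with he
  have he0 : 0 < e := by have := hx.1; positivity
  have hex : e ≤ x := min_le_right _ _
  have hed : e < d := (min_le_left _ _).trans_lt (by linarith)
  have hmem2 : ∀ y ∈ Icc e x, y ∈ Ioo 0 b := fun y hy => ⟨he0.trans_le hy.1, hy.2.trans_lt hx.2⟩
  have hQ : ∀ y ∈ Ioo 0 b, HasDerivAt (fun r => r^4 * force c p r ^ 2 - 4 * metricDen c p r) _ y :=
    fun y hy => ((hasDerivAt_pow 4 y).mul ((h.hasDerivAt_force (hmem y hy)).pow 2)).sub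
      ((h.hasDerivAt_metricDen (hmem y hy)).const_mul 4)
  have key := image_le_of_deriv_right_lt_deriv_boundary' (a := e) (b := x)
    (fun y hy => (hQ y (hmem2 y hy)).continuousAt.continuousWithinAt)
    (fun y hy => (hQ y (hmem2 y (Ico_subset_Icc_self hy))).hasDerivWithinAt)
    (B := fun _ => 0) (B' := fun _ => 0)
    (by have := (hd e ⟨he0, hed⟩).2; linarith)
    continuousOn_const (fun y _ => hasDerivWithinAt_const _ _ _) ?_
    (right_mem_Icc.2 hex)
  · linarith
  intro y hy hy0
  have hyb := hmem2 y (Ico_subset_Icc_self hy)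
  have hyR := hmem y hyb
  have hDy := hD y hyb
  have ha := h.meanDens_pos hyR
  have hw := h.force_pos hyR
  have hy1 := hyb.1
  -- the density at `y` is at most the mean density, as `p` decreases
  have ha' : (4 * π * (p y + c) - 3 * meanDens c p y) / y ≤ 0 := by
    have := h.le_meanDens (M := p y) hyR fun s hs =>
      h.antitoneOn hb hD ⟨hs.1, hs.2.trans hyb.2.le⟩ ⟨hyb.1.le, hyb.2.le⟩ hs.2
    apply div_nonpos_of_nonpos_of_nonneg _ hy1.le
    linarith
  have hDdef : metricDen c p y = 1 - 2 * meanDens c p y * y^2 := rfl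
  have hwdef : force c p y = meanDens c p y + 4 * π * p y := rfl
  set a := meanDens c p y
  set w := force c p y
  set D := metricDen c p y
  set a' := (4 * π * (p y + c) - 3 * a) / y with ha'def
  have h4 : 4 * π * (2 * p y + c) = y * a' + 2 * a + w := by
    rw [hwdef, ha'def]; field_simp; ring
  have hQ0 : y^4 * w^2 = 4 * D := by linarith
  have hform : 4 * π * -((2 * p y + c) * y * w / D) = - ((y * a' + 2 * a + w) * y * w / D) := by
    rw [← h4]; ring
  have hyw : y^2 * w < 2 := by
    have : (y^2 * w)^2 < 2^2 := by
      have : 0 < a * y^2 := by positivity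
      nlinarith
    exact lt_of_pow_lt_pow_left₀ 2 (by norm_num) this
  have hdiv : y^4 * w^2 / D = 4 := by rw [hQ0]; field_simp
  have hneg : 2 * y^4 * w * a' + 4 * y * w * (y^2 * w - 2) < 0 := by
    have h1 : 0 < 4 * y * w * (2 - y^2 * w) := by
      have : 0 < 2 - y^2 * w := by linarith
      positivity
    have h2 : 2 * y^4 * w * a' ≤ 0 := mul_nonpos_of_nonneg_of_nonpos (by positivity) ha'
    linarith
  refine lt_of_eq_of_lt ?_ hneg
  simp only [Pi.pow_apply]
  rw [hform]
  have : y^4 * (2 * w * -((y * a' + 2 * a + w) * y * w / D)) =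
      -(2 * (y * a' + 2 * a + w) * y) * (y^4 * w^2 / D) := by ring
  rw [hdiv] at this
  push_cast
  norm_num
  linear_combination this

/-- Under the force bound, `(1 - D)/2 = a r² ≤ w r² ≤ 2√D`, which keeps `D` away from zero. -/
lemma metricDen_ge_of_pos (h : IsSol c p R) {b : ℝ} (hb : b ≤ R)
    (hD : ∀ r ∈ Ioo 0 b, 0 < metricDen c p r) {x : ℝ} (hx : x ∈ Ioo 0 b) :
    1 / 20 ≤ metricDen c p x := by
  have hxR : x ∈ Ioo 0 R := ⟨hx.1, hx.2.trans_le hb⟩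
  have h1 := h.force_bound hb hD hx
  have h2 := h.meanDens_pos hxR
  have h3 : meanDens c p x ≤ force c p x := by
    have := h.nonneg x hxR
    unfold force
    have : 0 ≤ 4 * π * p x := by positivity
    linarith
  have h4 : (x^2 * meanDens c p x)^2 ≤ x^4 * force c p x ^ 2 := by
    rw [mul_pow, ← pow_mul]
    have := hx.1
    gcongr
  have h5 : metricDen c p x = 1 - 2 * meanDens c p x * x^2 := rfl
  have h6 : x^2 * meanDens c p x = (1 - metricDen c p x) / 2 := by rw [h5]; ring
  rw [h6] at h4
  by_contra! hlt
  nlinarith [hD x hx]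

/-- Uniform lower bound on `D`. At the first radius where `D ≤ 1/40`, continuity would contradict
the bound `D ≥ 1/20` valid before it; in particular the junk value of a division by zero never
enters the equation. -/
lemma metricDen_ge (h : IsSol c p R) {x : ℝ} (hx : x ∈ Ioo 0 R) : 1 / 20 ≤ metricDen c p x := by
  suffices hpos : ∀ r ∈ Ioo 0 R, 0 < metricDen c p r from h.metricDen_ge_of_pos le_rfl hpos hx
  by_contra! hcon
  obtain ⟨z, hz, hzD⟩ := hcon
  obtain ⟨d, hd0, hdR, hd⟩ := h.exists_small (hz.1.trans hz.2)
  have hcont : ContinuousOn (metricDen c p) (Ioo 0 R) := fun y hy =>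
    (h.hasDerivAt_metricDen hy).continuousAt.continuousWithinAt
  have hsub : Icc (d / 2) z ⊆ Ioo 0 R := fun y hy => ⟨by have := hy.1; linarith, hy.2.trans_lt hz.2⟩
  have hcl : IsCompact (Icc (d / 2) z ∩ metricDen c p ⁻¹' Iic (1 / 40)) :=
    isCompact_Icc.of_isClosed_subset
      ((hcont.mono hsub).preimage_isClosed_of_isClosed isClosed_Icc isClosed_Iic) inter_subset_left
  have hbig : ∀ y ∈ Ioo 0 R, metricDen c p y ≤ 1 / 40 → d ≤ y := by
    intro y hy hyD
    by_contra! hlt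
    have := (hd y ⟨hy.1, hlt⟩).1
    linarith
  have hzd := hbig z hz (by linarith)
  obtain ⟨t, ⟨ht, htD⟩, htmin⟩ := hcl.exists_isLeast
    ⟨z, ⟨by linarith, le_rfl⟩, by simp only [mem_preimage, mem_Iic]; linarith⟩
  have htR := hsub ht
  simp only [mem_preimage, mem_Iic] at htD
  have hpos : ∀ r ∈ Ioo 0 t, 0 < metricDen c p r := by
    intro r hr
    by_contra! hle
    have hrR : r ∈ Ioo 0 R := ⟨hr.1, hr.2.trans htR.2⟩
    have h1 := hbig r hrR (by linarith)
    have := htmin ⟨⟨by linarith, hr.2.le.trans ht.2⟩,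
      by simp only [mem_preimage, mem_Iic]; linarith⟩
    linarith [hr.2]
  have hlim : Filter.Tendsto (metricDen c p) (nhdsWithin t (Iio t)) (nhds (metricDen c p t)) :=
    (h.hasDerivAt_metricDen htR).continuousAt.continuousWithinAt
  have := ge_of_tendsto hlim (b := 1 / 20) <| by
    filter_upwards [Ioo_mem_nhdsLT htR.1] with y hy
    exact h.metricDen_ge_of_pos htR.2.le hpos hy
  linarith

lemma le_zero (h : IsSol c p R) {r : ℝ} (hr : r ∈ Icc 0 R) : p r ≤ p 0 :=
  h.antitoneOn le_rfl (fun x hx => by linarith [h.metricDen_ge hx])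
    ⟨le_rfl, hr.1.trans hr.2⟩ hr hr.1

/-! ### Comparison of the two solutions -/

lemma meanDens_le_add {c' : ℝ} {q : ℝ → ℝ} (h : IsSol c p R) (h' : IsSol c' q R) {r k : ℝ}
    (hr : r ∈ Ioo 0 R) (hk : ∀ s ∈ Icc 0 r, p s + c ≤ q s + c' + k) :
    meanDens c p r ≤ meanDens c' q r + 4 * π / 3 * k := by
  have h1 : massInt c p r ≤ massInt c' q r + k * r^3 / 3 := by
    have hi : IntervalIntegrable (fun s : ℝ => s^2 * k) volume 0 r := by
      apply Continuous.intervalIntegrable; fun_prop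
    rw [← integral_sq_mul_const, massInt, massInt,
      ← intervalIntegral.integral_add (h'.intervalIntegrable hr) hi]
    apply intervalIntegral.integral_mono_on hr.1.le (h.intervalIntegrable hr)
      ((h'.intervalIntegrable hr).add hi)
    intro x hx
    rw [← mul_add]
    exact mul_le_mul_of_nonneg_left (hk x hx) (sq_nonneg x)
  have hr0 := hr.1
  unfold meanDens
  calc _ ≤ 4 * π / r^3 * (massInt c' q r + k * r^3 / 3) := by gcongr
    _ = _ := by field_simp

end IsSol

/-- Lipschitz estimate for the right-hand sides at a fixed radius: `p, q` are the two pressures,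
`a, b` the mean densities, `w, v` the forces and `D, E` the metric coefficients. -/
lemma rhs_diff_le {P B p q a b w v D E r : ℝ} (hP : 1 ≤ P) (hB : 0 ≤ B) (hr : 0 < r)
    (hq : 0 ≤ q) (hqP : q ≤ P) (hpq : |p - q| ≤ B)
    (hab : |a - b| ≤ 6 * (1 + B)) (hw : 0 ≤ w) (hwP : w ≤ 27 * P) (hv : 0 ≤ v)
    (hvP : v ≤ 27 * P) (hwv : |w - v| ≤ 22 * (1 + B)) (hD : 1 / 20 ≤ D) (hE : 1 / 20 ≤ E)
    (hDE : D - E = -(2 * (a - b) * r^2)) :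
    |(2 * p + 1) * r * w / D - 2 * q * r * v / E| ≤
      64800 * (2 * P * r + 4 * P^2 * r^3) * (1 + B) := by
  have hD0 : 0 < D := by linarith
  have hE0 : 0 < E := by linarith
  have hDi : 1 / D ≤ 20 := by rw [div_le_iff₀ hD0]; linarith
  have hEi : 1 / E ≤ 20 := by rw [div_le_iff₀ hE0]; linarith
  have hsplit : (2 * p + 1) * r * w / D - 2 * q * r * v / E =
      (2 * (p - q) + 1) * r * w * (1 / D) + 2 * q * r * (w - v) * (1 / D) +
        2 * q * r * v * (2 * (a - b) * r^2) * (1 / D) * (1 / E) := by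
    have : 2 * (a - b) * r^2 = E - D := by linarith
    rw [this]
    field_simp
    ring
  have t1 : |2 * (p - q) + 1| ≤ 2 * (1 + B) := by
    rw [abs_le] at *
    constructor <;> linarith [hpq.1, hpq.2]
  have T1 : |(2 * (p - q) + 1) * r * w * (1 / D)| ≤ 2 * (1 + B) * r * (27 * P) * 20 := by
    rw [abs_mul, abs_mul, abs_mul, abs_of_pos hr, abs_of_nonneg hw,
      abs_of_pos (by positivity : 0 < 1 / D)]
    gcongr
  have T2 : |2 * q * r * (w - v) * (1 / D)| ≤ 2 * P * r * (22 * (1 + B)) * 20 := by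
    rw [abs_mul, abs_mul, abs_of_nonneg (by positivity : 0 ≤ 2 * q * r),
      abs_of_pos (by positivity : 0 < 1 / D)]
    gcongr
  have T3 : |2 * q * r * v * (2 * (a - b) * r^2) * (1 / D) * (1 / E)| ≤
      2 * P * r * (27 * P) * (2 * (6 * (1 + B)) * r^2) * 20 * 20 := by
    rw [abs_mul, abs_mul, abs_mul, abs_of_nonneg (by positivity : 0 ≤ 2 * q * r * v),
      abs_of_pos (by positivity : 0 < 1 / D), abs_of_pos (by positivity : 0 < 1 / E),
      abs_mul, abs_mul, abs_of_pos (by positivity : 0 < r^2), abs_two]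
    gcongr
  rw [hsplit]
  refine (abs_add_three _ _ _).trans ?_
  have : 0 ≤ P * r * (1 + B) := by positivity
  have : 2 * (1 + B) * r * (27 * P) * 20 = 1080 * (P * r * (1 + B)) := by ring
  linarith

/-- If both pressures differ by at most `B` on `[0, r]`, their derivatives differ at `r` by at most
a multiple of `1 + B`; the summand `1` comes from the different equations of state. -/
lemma deriv_diff_le {R P B r : ℝ} {p q : ℝ → ℝ} (hp : IsSol 1 p R) (hq : IsSol 0 q R)
    (hp0 : p 0 = P) (hq0 : q 0 = P) (hP : 1 ≤ P) (hr : r ∈ Ioo 0 R)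
    (hB : ∀ s ∈ Icc 0 r, |p s - q s| ≤ B) :
    |(2 * p r + 1) * r * force 1 p r / metricDen 1 p r -
      2 * q r * r * force 0 q r / metricDen 0 q r| ≤
      64800 * (2 * P * r + 4 * P^2 * r^3) * (1 + B) := by
  have hB0 : 0 ≤ B := (abs_nonneg _).trans (hB 0 ⟨le_rfl, hr.1.le⟩)
  have hsub : ∀ s ∈ Icc 0 r, s ∈ Icc 0 R := fun s hs => ⟨hs.1, hs.2.trans hr.2.le⟩
  have hpP : ∀ s ∈ Icc 0 r, p s ≤ P := fun s hs => hp0 ▸ hp.le_zero (hsub s hs)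
  have hqP : ∀ s ∈ Icc 0 r, q s ≤ P := fun s hs => hq0 ▸ hq.le_zero (hsub s hs)
  have hrr : r ∈ Icc 0 r := ⟨hr.1.le, le_rfl⟩
  have hpi : π ≤ 4 := pi_le_four
  have hpi0 := pi_pos
  have m1 : π * P ≤ 4 * P := by gcongr
  have m2 : π * B ≤ 4 * B := by gcongr
  have ha := hp.meanDens_le hr hpP
  have hb := hq.meanDens_le hr hqP
  have hab : meanDens 1 p r - meanDens 0 q r ≤ 4 * π / 3 * (1 + B) := by
    have := hp.meanDens_le_add hq (k := 1 + B) hr fun s hs => by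
      linarith [(abs_le.1 (hB s hs)).2]
    linarith
  have hba : meanDens 0 q r - meanDens 1 p r ≤ 4 * π / 3 * B := by
    have := hq.meanDens_le_add hp (k := B) hr fun s hs => by
      linarith [(abs_le.1 (hB s hs)).1]
    linarith
  have h1 : π * p r ≤ π * P := mul_le_mul_of_nonneg_left (hpP r hrr) hpi0.le
  have h2 : π * q r ≤ π * P := mul_le_mul_of_nonneg_left (hqP r hrr) hpi0.le
  have h3 : π * (p r - q r) ≤ π * B := mul_le_mul_of_nonneg_left (abs_le.1 (hB r hrr)).2 hpi0.le
  have h4 : π * -B ≤ π * (p r - q r) := mul_le_mul_of_nonneg_left (abs_le.1 (hB r hrr)).1 hpi0.le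
  have hD := hp.metricDen_ge hr
  have hE := hq.metricDen_ge hr
  have hw := (hp.force_pos hr).le
  have hv := (hq.force_pos hr).le
  refine rhs_diff_le (a := meanDens 1 p r) (b := meanDens 0 q r) hP hB0 hr.1 (hq.nonneg r hr)
    (hqP r hrr) (hB r hrr) ?_ hw ?_ hv ?_ ?_ hD hE ?_
  · rw [abs_le]; constructor <;> linarith
  · unfold force; linarith
  · unfold force; linarith
  · unfold force; rw [abs_le]; constructor <;> linarith
  · unfold metricDen; ring

/-- Grönwall argument. The barrier is `(1 + ε) exp(K g) - 1` with `g = P r² + P² r⁴`, which grows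
at rate `K g' (1 + barrier)`; the difference of the pressures cannot reach it, since at the first
contact `deriv_diff_le` applies at all smaller radii. -/
lemma diff_lt_barrier {R P ε : ℝ} {p q : ℝ → ℝ} (hp : IsSol 1 p R) (hq : IsSol 0 q R)
    (hp0 : p 0 = P) (hq0 : q 0 = P) (hP : 1 ≤ P) (hε : 0 < ε) {r : ℝ} (hr : r ∈ Icc 0 R) :
    |p r - q r| < (1 + ε) * exp (64800 * (P * r^2 + P^2 * r^4)) - 1 := by
  set B : ℝ → ℝ := fun r => (1 + ε) * exp (64800 * (P * r^2 + P^2 * r^4)) - 1 with hBdef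
  have hBder : ∀ x, HasDerivAt B (64800 * (2 * P * x + 4 * P^2 * x^3) * (1 + B x)) x := by
    intro x
    have h1 := (((((hasDerivAt_pow 2 x).const_mul P).add
      ((hasDerivAt_pow 4 x).const_mul (P^2))).const_mul 64800).exp.const_mul (1 + ε)).sub_const 1
    refine HasDerivAt.congr_deriv (f := B) h1 ?_
    simp only [hBdef, Pi.add_apply]
    push_cast
    ring
  have hBcont : Continuous B := by fun_prop
  have hBmono : ∀ x y, 0 ≤ x → x ≤ y → B x ≤ B y := by
    intro x y hx hxy
    simp only [hBdef]
    gcongr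
  have hB0 : B 0 = ε := by simp [hBdef]
  by_contra! hcon
  have hdc : ContinuousOn (fun s => p s - q s) (Icc 0 R) := hp.cont.sub hq.cont
  have hcl : IsCompact (Icc 0 R ∩ (fun s => |p s - q s| - B s) ⁻¹' Ici 0) :=
    isCompact_Icc.of_isClosed_subset
      ((hdc.abs.sub hBcont.continuousOn).preimage_isClosed_of_isClosed isClosed_Icc isClosed_Ici)
      inter_subset_left
  obtain ⟨t, ⟨ht, htB⟩, htmin⟩ := hcl.exists_isLeast ⟨r, hr, sub_nonneg.2 hcon⟩
  replace htB : B t ≤ |p t - q t| := sub_nonneg.1 htB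
  have hbelow : ∀ s, 0 ≤ s → s < t → |p s - q s| ≤ B s := by
    intro s hs hst
    by_contra! hlt
    exact absurd (htmin ⟨⟨hs, hst.le.trans ht.2⟩, sub_nonneg.2 hlt.le⟩) (not_le.2 hst)
  have hder : ∀ x ∈ Ioo 0 t, HasDerivAt (fun s => p s - q s)
      (-((2 * p x + 1) * x * force 1 p x / metricDen 1 p x -
      2 * q x * x * force 0 q x / metricDen 0 q x)) x := by
    intro x hx
    have hxR : x ∈ Ioo 0 R := ⟨hx.1, hx.2.trans_le ht.2⟩
    refine ((hp.deriv x hxR).sub (hq.deriv x hxR)).congr_deriv ?_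
    ring
  have hbd : ∀ x ∈ Ioo 0 t, _ := fun x hx =>
    abs_le.1 (deriv_diff_le (B := B x) hp hq hp0 hq0 hP ⟨hx.1, hx.2.trans_le ht.2⟩ fun s hs =>
      (hbelow s hs.1 (hs.2.trans_lt hx.2)).trans (hBmono s x hs.1 hs.2))
  have hsub : Icc 0 t ⊆ Icc 0 R := Icc_subset_Icc_right ht.2
  have hm1 : MonotoneOn (fun s => B s - (p s - q s)) (Icc 0 t) := by
    apply monotoneOn_of_deriv_nonneg (convex_Icc 0 t)
      (hBcont.continuousOn.sub (hdc.mono hsub)) <;> rw [interior_Icc]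
    · exact fun x hx => ((hBder x).sub (hder x hx)).differentiableAt.differentiableWithinAt
    · intro x hx
      rw [((hBder x).sub (hder x hx)).deriv]
      linarith [(hbd x hx).1]
  have hm2 : MonotoneOn (fun s => B s + (p s - q s)) (Icc 0 t) := by
    apply monotoneOn_of_deriv_nonneg (convex_Icc 0 t)
      (hBcont.continuousOn.add (hdc.mono hsub)) <;> rw [interior_Icc]
    · exact fun x hx => ((hBder x).add (hder x hx)).differentiableAt.differentiableWithinAt
    · intro x hx
      rw [((hBder x).add (hder x hx)).deriv]
      linarith [(hbd x hx).2]
  have e1 := hm1 ⟨le_rfl, ht.1⟩ ⟨ht.1, le_rfl⟩ ht.1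
  have e2 := hm2 ⟨le_rfl, ht.1⟩ ⟨ht.1, le_rfl⟩ ht.1
  simp only [hp0, hq0, hB0, sub_self, sub_zero, add_zero] at e1 e2
  have : |p t - q t| < B t := abs_lt.2 ⟨by linarith, by linarith⟩
  linarith

/-- Comparison of the hard phase pressure `p_κ` with its massless counterpart `p*_κ`:
there is a universal constant `C > 0` such that for all `κ > 0` and all `r ≥ 0` at which
both (nonnegative) solutions are defined,
`|p_κ(r) − p*_κ(r)| ≤ C e^{6κ}(r² + e^{4κ}r⁴) exp(C(e^{4κ}r² + e^{8κ}r⁴))`. -/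
theorem hard_vs_massless_pressure :
    ∃ C > (0:ℝ), ∀ κ > (0:ℝ), ∀ R > (0:ℝ), ∀ p pstar : ℝ → ℝ,
      p 0 = Real.exp (4*κ) → pstar 0 = Real.exp (4*κ) →
      ContinuousOn p (Set.Icc 0 R) → ContinuousOn pstar (Set.Icc 0 R) →
      (∀ r ∈ Set.Ioo (0:ℝ) R, 0 ≤ p r ∧ HasDerivAt p (rhsHard p r) r) →
      (∀ r ∈ Set.Ioo (0:ℝ) R, 0 ≤ pstar r ∧ HasDerivAt pstar (rhsStar pstar r) r) →
      ∀ r ∈ Set.Icc (0:ℝ) R,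
        |p r - pstar r| ≤
          C * Real.exp (6*κ) * (r^2 + Real.exp (4*κ) * r^4) *
            Real.exp (C * (Real.exp (4*κ) * r^2 + Real.exp (8*κ) * r^4)) := by
  refine ⟨64801, by norm_num, ?_⟩
  intro κ hκ R hR p q hp0 hq0 hpc hqc hp hq r hr
  have hsp : IsSol 1 p R := by
    refine ⟨zero_le_one, hpc, hp0 ▸ exp_pos _, fun x hx => (hp x hx).1, fun x hx => ?_⟩
    refine (hp x hx).2.congr_deriv ?_
    have hx0 : x ≠ 0 := hx.1.ne'
    have e1 : 1 - 8 * π / x * ∫ s in (0:ℝ)..x, s^2 * Shard (p s) = metricDen 1 p x := by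
      simp only [metricDen, meanDens, massInt, Shard]; field_simp; ring
    have e2 : 4 * π / x^2 * (∫ s in (0:ℝ)..x, s^2 * Shard (p s)) + 4 * π * x * p x =
        x * force 1 p x := by
      simp only [force, meanDens, massInt, Shard]; field_simp
    rw [rhsHard, e1, e2, Shard]
    ring
  have hsq : IsSol 0 q R := by
    refine ⟨le_rfl, hqc, hq0 ▸ exp_pos _, fun x hx => (hq x hx).1, fun x hx => ?_⟩
    refine (hq x hx).2.congr_deriv ?_
    have hx0 : x ≠ 0 := hx.1.ne'
    have e1 : 1 - 8 * π / x * ∫ s in (0:ℝ)..x, s^2 * q s = metricDen 0 q x := by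
      simp only [metricDen, meanDens, massInt, add_zero]; field_simp; ring
    have e2 : 4 * π / x^2 * (∫ s in (0:ℝ)..x, s^2 * q s) + 4 * π * x * q x =
        x * force 0 q x := by
      simp only [force, meanDens, massInt, add_zero]; field_simp
    rw [rhsStar, e1, e2]
    ring
  rcases hr.1.eq_or_lt with rfl | hr0
  · simp [hp0, hq0]
  have hP : 1 ≤ exp (4 * κ) := one_le_exp (by positivity)
  have e8 : exp (8 * κ) = exp (4 * κ) ^ 2 := by rw [← exp_nat_mul]; congr 1; push_cast; ring
  have e46 : exp (4 * κ) ≤ exp (6 * κ) := exp_le_exp.2 (by linarith)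
  rw [e8]
  set P := exp (4 * κ)
  set g := P * r^2 + P^2 * r^4 with hg
  have hg0 : 0 < g := by positivity
  -- taking `ε = g(r)` in the barrier absorbs the factor `1 + ε` into the exponential
  have h1 := diff_lt_barrier hsp hsq hp0 hq0 hP hg0 hr
  have h2 : (1 + g) * exp (64800 * g) ≤ exp (64801 * g) := by
    have : exp (64801 * g) = exp g * exp (64800 * g) := by rw [← exp_add]; congr 1; ring
    rw [this]
    gcongr
    linarith [add_one_le_exp g]
  have h3 : exp (64801 * g) - 1 ≤ 64801 * g * exp (64801 * g) := by
    have h4 := add_one_le_exp (-(64801 * g))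
    have h5 : exp (-(64801 * g)) * exp (64801 * g) = 1 := by rw [← exp_add]; simp
    nlinarith [exp_pos (64801 * g)]
  calc |p r - q r| ≤ 64801 * g * exp (64801 * g) := by linarith
    _ = 64801 * P * (r^2 + P * r^4) * exp (64801 * g) := by rw [hg]; ring
    _ ≤ 64801 * exp (6 * κ) * (r^2 + P * r^4) * exp (64801 * g) := by gcongr
end

section
/- Consider the planar autonomous vector field F(w₁, w₂) = (w₁(2 − 6w₂ − 8πw₁)/(1 − 2w₂), 4πw₁ − w₂) on the region Ω = {(w₁, w₂) : w₁ > 0, w₂ < 1/2}. Then the system w′ = F(w) admits no nonconstant periodic solution whose image is contained in Ω; indeed the Dulac criterion applies with factor 1/w₁, since div((1/w₁)F(w)) = −8π/(1 − 2w₂) − 1/w₁ < 0 throughout Ω. -/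
/-!
The divergence formula is a direct computation. Periodic orbits are excluded by a strict Lyapunov
function, which avoids Green's theorem and the Jordan curve theorem. With `X = 4πw₁`, `y = w₂` the
system reads `X′ = X(2 − 6y − 2X)/(1 − 2y)`, `y′ = X − y`, and its equilibrium in `Ω` is
`X = y = 1/4`. Since `2 − 6y − 2X = −6(y − 1/4) − 2(X − 1/4)`, the cross terms cancel in the
derivative of
`V = X − (1/4) log X − 3y − (3/4) log (1 − 2y)`
along the flow, leaving `V′ = −(2(X − 1/4)² + 6(y − 1/4)²)/(1 − 2y) ≤ 0` (`hasDerivAt_lyap`).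
Along a periodic solution `V` is nonincreasing and periodic, hence constant
(`antitone_periodic_const`), so `V′ = 0` and the solution sits at the equilibrium.
-/

open Real Set

/-- The planar autonomous vector field
`F(w₁,w₂) = (w₁(2 − 6w₂ − 8πw₁)/(1 − 2w₂), 4πw₁ − w₂)`. -/
noncomputable def Fvec (w : ℝ × ℝ) : ℝ × ℝ :=
  (w.1 * (2 - 6 * w.2 - 8 * Real.pi * w.1) / (1 - 2 * w.2), 4 * Real.pi * w.1 - w.2)

/-- The Lyapunov function `V = X − (1/4) log X − 3y − (3/4) log (1 − 2y)`, where `X = 4πw₁` and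
`y = w₂`; both logarithms have positive arguments on `Ω`. -/
noncomputable def lyap (w : ℝ × ℝ) : ℝ :=
  4 * Real.pi * w.1 - 1 / 4 * Real.log (4 * Real.pi * w.1) - 3 * w.2
    - 3 / 4 * Real.log (1 - 2 * w.2)

theorem hasDerivAt_lyap (w : ℝ → ℝ × ℝ) (t : ℝ) (hd : HasDerivAt w (Fvec (w t)) t)
    (h1 : 0 < (w t).1) (h2 : (w t).2 < 1 / 2) :
    HasDerivAt (fun s => lyap (w s))
      (-(2 * (4 * Real.pi * (w t).1 - 1 / 4) ^ 2 + 6 * ((w t).2 - 1 / 4) ^ 2)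
        / (1 - 2 * (w t).2)) t := by
  have hx : HasDerivAt (fun s => (w s).1) (Fvec (w t)).1 t := hd.fst
  have hy : HasDerivAt (fun s => (w s).2) (Fvec (w t)).2 t := hd.snd
  have hpi := Real.pi_pos
  have hX : 4 * Real.pi * (w t).1 ≠ 0 := by positivity
  have hY : 1 - 2 * (w t).2 ≠ 0 := by linarith
  have hX' := hx.const_mul (4 * Real.pi)
  have hY' := (hy.const_mul 2).const_sub 1
  have h := ((hX'.sub ((hX'.log hX).const_mul (1 / 4))).sub (hy.const_mul 3)).sub
    ((hY'.log hY).const_mul (3 / 4))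
  refine h.congr_deriv ?_
  simp only [Fvec]
  field_simp
  ring

theorem antitone_periodic_const {f : ℝ → ℝ} {T : ℝ} (hT : 0 < T) (hf : Antitone f)
    (hp : Function.Periodic f T) (a b : ℝ) : f a = f b := by
  have key : ∀ a b : ℝ, f b ≤ f a := by
    intro a b
    obtain ⟨n, hn⟩ := exists_nat_ge ((a - b) / T)
    have hab : a ≤ b + n * T := by
      rw [div_le_iff₀ hT] at hn
      linarith
    calc f b = f (b + n * T) := (hp.nat_mul n b).symm
      _ ≤ f a := hf hab
  exact le_antisymm (key b a) (key a b)

/-- Dulac's criterion for the planar system `w′ = F(w)` on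
`Ω = {w₁ > 0, w₂ < 1/2}`: the divergence of `(1/w₁)F` equals
`−8π/(1 − 2w₂) − 1/w₁ < 0` on `Ω`, and the system admits no nonconstant periodic
solution whose image is contained in `Ω`. -/
theorem dulac_no_periodic_orbit :
    (∀ w₁ w₂ : ℝ, 0 < w₁ → w₂ < 1/2 →
      deriv (fun x => (Fvec (x, w₂)).1 / x) w₁ +
          deriv (fun z => (Fvec (w₁, z)).2 / w₁) w₂ =
        -(8 * Real.pi) / (1 - 2 * w₂) - 1 / w₁ ∧
      -(8 * Real.pi) / (1 - 2 * w₂) - 1 / w₁ < 0) ∧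
    (∀ (w : ℝ → ℝ × ℝ) (T : ℝ), 0 < T →
      (∀ t : ℝ, HasDerivAt w (Fvec (w t)) t) →
      (∀ t : ℝ, 0 < (w t).1 ∧ (w t).2 < 1/2) →
      (∀ t : ℝ, w (t + T) = w t) →
      ∀ t s : ℝ, w t = w s) := by
  have hpi := Real.pi_pos
  refine ⟨?_, ?_⟩
  · intro w₁ w₂ h1 h2
    have hY : 0 < 1 - 2 * w₂ := by linarith
    have hY0 : 1 - 2 * w₂ ≠ 0 := hY.ne'
    have hx0 : w₁ ≠ 0 := h1.ne'
    refine ⟨?_, ?_⟩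
    · have e1 : HasDerivAt (fun x => (Fvec (x, w₂)).1 / x) (-(8 * Real.pi) / (1 - 2 * w₂)) w₁ := by
        have hx := hasDerivAt_id' w₁
        have h := (((hx.mul ((hx.const_mul (8 * Real.pi)).const_sub (2 - 6 * w₂))).div_const
          (1 - 2 * w₂)).div hx hx0)
        refine h.congr_deriv ?_
        simp only [Pi.mul_apply]
        field_simp
        ring
      have e2 : HasDerivAt (fun z => (Fvec (w₁, z)).2 / w₁) (-1 / w₁) w₂ :=
        ((hasDerivAt_id' w₂).const_sub (4 * Real.pi * w₁)).div_const w₁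
      rw [e1.deriv, e2.deriv]
      ring
    · have p1 : 0 < 8 * Real.pi / (1 - 2 * w₂) := by positivity
      have p2 : 0 < 1 / w₁ := by positivity
      rw [neg_div]
      linarith
  · intro w T hT hd hΩ hp
    have hV := fun t => hasDerivAt_lyap w t (hd t) (hΩ t).1 (hΩ t).2
    have hanti : Antitone (fun s => lyap (w s)) := by
      refine antitone_of_hasDerivAt_nonpos hV fun t => ?_
      have hY : 0 < 1 - 2 * (w t).2 := by linarith [(hΩ t).2]
      exact div_nonpos_of_nonpos_of_nonneg (neg_nonpos.mpr (by positivity)) hY.le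
    have hper : Function.Periodic (fun s => lyap (w s)) T := fun s => by simp only [hp s]
    have heq : ∀ t, w t = (1 / (16 * Real.pi), 1 / 4) := by
      intro t
      have hconst : (fun s => lyap (w s)) = fun _ => lyap (w t) :=
        funext fun s => antitone_periodic_const hT hanti hper s t
      have h0 := (hV t).unique (hconst ▸ hasDerivAt_const t (lyap (w t)))
      have hY : 1 - 2 * (w t).2 ≠ 0 := by linarith [(hΩ t).2]
      rw [div_eq_zero_iff, or_iff_left hY] at h0
      have hX : 4 * Real.pi * (w t).1 - 1 / 4 = 0 := by
        apply pow_eq_zero_iff (two_ne_zero) |>.mp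
        nlinarith [sq_nonneg (4 * Real.pi * (w t).1 - 1 / 4), sq_nonneg ((w t).2 - 1 / 4)]
      have hy : (w t).2 - 1 / 4 = 0 := by
        apply pow_eq_zero_iff (two_ne_zero) |>.mp
        nlinarith [sq_nonneg (4 * Real.pi * (w t).1 - 1 / 4), sq_nonneg ((w t).2 - 1 / 4)]
      refine Prod.ext ?_ (by linarith)
      rw [eq_div_iff (by positivity)]
      linarith
    intro t s
    rw [heq t, heq s]
end
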